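/- Let N ⊆ M_m be a unital *-subalgebra, p ∈ [1/2, ∞] and ρ ∈ M_m a density. Then there exists a density σ ∈ N with D_p(ρ‖σ) = D_p(ρ‖N); moreover if 1/2 < p < ∞ this minimizing density σ is unique. -/

import Mathlib

open scoped ENNReal Classical ComplexOrder
open Matrix

noncomputable section

namespace GJL

variable {n : Type*} [Fintype n] [DecidableEq n]

/-- `Mat n` is the matrix *-algebra with rows and columns indexed by `n`. -/
abbrev Mat (n : Type*) [Fintype n] [DecidableEq n] := Matrix n n ℂ

/-- A density matrix: positive semidefinite with trace one. -/
def IsDensity (ρ : Mat n) : Prop := ρ.PosSemidef ∧ ρ.trace = 1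

/-- The real part of the (matrix) trace. -/
def traceR (A : Mat n) : ℝ := (A.trace).re

/-- Real matrix powers via the continuous functional calculus.  For positive
semidefinite matrices and negative exponents this is the generalized inverse
power on the support, since `(0 : ℝ) ^ r = 0` for `r ≠ 0`. -/
def mpow (A : Mat n) (r : ℝ) : Mat n := cfc (fun x : ℝ => x ^ r) A

/-- Matrix logarithm on the support (`Real.log 0 = 0`). -/
def mlog (A : Mat n) : Mat n := cfc Real.log A

/-- Schatten `p`-norm `(Tr ((x* x)^(p/2)))^(1/p)`. -/
def snorm (p : ℝ) (x : Mat n) : ℝ := (traceR (mpow (xᴴ * x) (p/2))) ^ (1/p)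

/-- Operator norm `‖x‖_∞`. -/
def opNorm (x : Mat n) : ℝ := ‖(Matrix.toEuclideanCLM (𝕜 := ℂ) x : EuclideanSpace ℂ n →L[ℂ] EuclideanSpace ℂ n)‖

/-- The support projection of `ρ` is dominated by that of `σ` (for positive
semidefinite matrices: `ker σ ⊆ ker ρ`). -/
def suppLe (ρ σ : Mat n) : Prop := ∀ v, σ.mulVec v = 0 → ρ.mulVec v = 0

/-- `e` is the support projection of `ρ`. -/
def IsSupportProj (ρ e : Mat n) : Prop :=
  e.IsHermitian ∧ e * e = e ∧ ∀ v, e.mulVec v = 0 ↔ ρ.mulVec v = 0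

/-- `D_∞(ρ‖σ) = log min {λ ≥ 0 | ρ ≤ λ σ}`, `⊤` if no such `λ` exists. -/
def Dinf (ρ σ : Mat n) : EReal :=
  if ∃ c : ℝ, 0 ≤ c ∧ (c • σ - ρ).PosSemidef then
    ((Real.log (sInf {c : ℝ | 0 ≤ c ∧ (c • σ - ρ).PosSemidef}) : ℝ) : EReal)
  else ⊤

/-- Umegaki relative entropy `D(ρ‖σ) = Tr(ρ log ρ - ρ log σ)`, `⊤` if the
support condition fails. -/
def DU (ρ σ : Mat n) : EReal :=
  if suppLe ρ σ then ((traceR (ρ * mlog ρ - ρ * mlog σ) : ℝ) : EReal) else ⊤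

/-- The sandwiched matrix `σ^{(1-p)/(2p)} ρ σ^{(1-p)/(2p)}`; note that for
`p > 1` the exponent `(1-p)/(2p)` equals `-1/(2p')` with `1/p + 1/p' = 1`. -/
def sandwich (p : ℝ) (ρ σ : Mat n) : Mat n :=
  mpow σ ((1 - p)/(2*p)) * ρ * mpow σ ((1 - p)/(2*p))

/-- The sandwiched Rényi relative entropy `D_p(ρ‖σ)` for `p ∈ [1/2, ∞]`:
for `p ∈ (1,∞)` it is `p' log ‖σ^{-1/(2p')} ρ σ^{-1/(2p')}‖_p
= (p-1)⁻¹ log Tr ((σ^{-1/(2p')} ρ σ^{-1/(2p')})^p)` when the support of `ρ` is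
dominated by that of `σ` and `⊤` otherwise; for `p ∈ [1/2, 1)` it is
`(p-1)⁻¹ log Tr ((σ^{(1-p)/(2p)} ρ σ^{(1-p)/(2p)})^p)` (`⊤` when the trace
vanishes, i.e. when the honest value is `+∞`); `D_1` is the Umegaki relative
entropy and `D_∞` the max-relative entropy. -/
def Dp (p : ℝ≥0∞) (ρ σ : Mat n) : EReal :=
  if p = ⊤ then Dinf ρ σ
  else if p = 1 then DU ρ σ
  else if 1 < p.toReal ∧ ¬ suppLe ρ σ then ⊤
  else if traceR (mpow (sandwich p.toReal ρ σ) p.toReal) = 0 then ⊤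
  else (((p.toReal - 1)⁻¹ * Real.log (traceR (mpow (sandwich p.toReal ρ σ) p.toReal)) : ℝ) : EReal)

/-- `D_p(ρ‖S) = inf { D_p(ρ‖σ) | σ a density in S }`. -/
def DpSet (p : ℝ≥0∞) (ρ : Mat n) (S : Set (Mat n)) : EReal :=
  ⨅ σ ∈ {σ ∈ S | IsDensity σ}, Dp p ρ σ

/-- `D_p(A‖S) = sup { D_p(ρ‖S) | ρ a density in A }`. -/
def DpRel (p : ℝ≥0∞) (A S : Set (Mat n)) : EReal :=
  ⨆ ρ ∈ {ρ ∈ A | IsDensity ρ}, DpSet p ρ S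

open scoped Kronecker in
/-- The algebraic tensor product `N₁ ⊗ N₂ ⊆ M_{n₁} ⊗ M_{n₂} = M_{n₁ × n₂}`,
realized as the linear span of Kronecker products. -/
def tensorSpan {n₁ n₂ : Type*} [Fintype n₁] [DecidableEq n₁] [Fintype n₂] [DecidableEq n₂]
    (N₁ : Set (Mat n₁)) (N₂ : Set (Mat n₂)) : Set (Mat (n₁ × n₂)) :=
  ↑(Submodule.span ℂ {z : Mat (n₁ × n₂) | ∃ x ∈ N₁, ∃ y ∈ N₂, z = x ⊗ₖ y})

/-- `D_{p,cb}(M‖N) = sup_k D_p(M_k ⊗ M ‖ M_k ⊗ N)`. -/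
def DpCb (p : ℝ≥0∞) (N : Set (Mat n)) : EReal :=
  ⨆ k : ℕ, DpRel p Set.univ (tensorSpan (Set.univ : Set (Mat (Fin k))) N)

/-- `E` is the trace preserving conditional expectation onto `N`, i.e. the
orthogonal projection onto `N` with respect to the Hilbert–Schmidt inner
product `⟨x,y⟩ = Tr(x* y)`. -/
def IsCondExp (N : Set (Mat n)) (E : Mat n →ₗ[ℂ] Mat n) : Prop :=
  (∀ x, E x ∈ N) ∧ (∀ x ∈ N, E x = x) ∧
    ∀ x y, y ∈ N → ((E x)ᴴ * y).trace = (xᴴ * y).trace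

/-- The Pimsner–Popa index constant
`λ(M:N) = max {c ≥ 0 | c x ≤ E(x) for all x ≥ 0}`. -/
def ppIndex (E : Mat n →ₗ[ℂ] Mat n) : ℝ :=
  sSup {c : ℝ | 0 ≤ c ∧ ∀ x : Mat n, x.PosSemidef → (E x - c • x).PosSemidef}

/-- von Neumann entropy `H(ρ) = -Tr(ρ log ρ)`. -/
def vnEntropy (ρ : Mat n) : ℝ := - traceR (ρ * mlog ρ)

/-- The amplification `id_{M_k} ⊗ Φ` acting on `M_k ⊗ M_n = M_{k × n}`,
applying `Φ` blockwise. -/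
def ampFun (k : Type*) [Fintype k] [DecidableEq k] (Φ : Mat n →ₗ[ℂ] Mat n)
    (X : Mat (k × n)) : Mat (k × n) :=
  Matrix.of fun a b => Φ (Matrix.of fun s t => X (a.1, s) (b.1, t)) a.2 b.2

/-- Complete positivity: all amplifications `id_{M_k} ⊗ Φ` preserve positive
semidefiniteness. -/
def IsCP (Φ : Mat n →ₗ[ℂ] Mat n) : Prop :=
  ∀ (k : ℕ) (X : Mat (Fin k × n)), X.PosSemidef → (ampFun (Fin k) Φ X).PosSemidef

/-- Completely positive and trace preserving. -/
def IsCPTP (Φ : Mat n →ₗ[ℂ] Mat n) : Prop :=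
  IsCP Φ ∧ ∀ x : Mat n, (Φ x).trace = x.trace

/-!
If `p = ∞`, sublevel sets of `D_p(ρ‖·)` are closed because `ρ ≤ λσ` is a closed condition on `σ`.
For finite `p ≠ 1` they are closed and, in the variable `A = σ^s` with `s = |1 - p| / p`, convex:
when `p < 1` because `Tr ((ρ^{1/2} A ρ^{1/2})^p)` is continuous and concave in `A`, and when `p > 1`
because Schur complements turn an upper bound on `Tr ((ρ^{1/2} A⁻¹ ρ^{1/2})^p)` into the existence
of a positive semidefinite block matrix that is affine in `A`. As the densities in `N` form a
compact set, a minimizer exists. If `p > 1/2` then `s < 1`, so `Tr σ = Tr A^{1/s}` is strictly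
convex in `A`; hence the power mean of two distinct minimizers is as good as they are but has trace
less than one, and normalizing it would beat them.

For `p = 1` let `ω` be the conditional expectation of `ρ` onto `N`. Then
`D(ρ‖σ) = D(ρ‖ω) + D(ω‖σ)` for `σ ∈ N`, so by Klein's inequality `ω` is the only minimizer.
-/

/-! ### Trace and functional calculus -/

lemma traceR_add (A B : Mat n) : traceR (A + B) = traceR A + traceR B := by simp [traceR]

lemma traceR_sub (A B : Mat n) : traceR (A - B) = traceR A - traceR B := by simp [traceR]

lemma traceR_smul (c : ℝ) (A : Mat n) : traceR (c • A) = c * traceR A := by simp [traceR]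

lemma traceR_mul_comm (A B : Mat n) : traceR (A * B) = traceR (B * A) := by
  rw [traceR, trace_mul_comm, traceR]

lemma continuous_traceR : Continuous (traceR : Mat n → ℝ) := by
  unfold traceR
  fun_prop

lemma traceR_eq_one {ρ : Mat n} (hρ : IsDensity ρ) : traceR ρ = 1 := by
  simp [traceR, hρ.2]

lemma traceR_nonneg {A : Mat n} (hA : A.PosSemidef) : 0 ≤ traceR A :=
  (Complex.le_def.1 hA.trace_nonneg).1

lemma trace_eq_ofReal_traceR {A : Mat n} (hA : A.PosSemidef) : A.trace = (traceR A : ℂ) :=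
  Complex.ext rfl (Complex.le_def.1 hA.trace_nonneg).2.symm

lemma traceR_eq_zero_iff {A : Mat n} (hA : A.PosSemidef) : traceR A = 0 ↔ A = 0 := by
  rw [← hA.trace_eq_zero_iff, trace_eq_ofReal_traceR hA, Complex.ofReal_eq_zero]

lemma traceR_pos {A : Mat n} (hA : A.PosSemidef) (h0 : A ≠ 0) : 0 < traceR A :=
  (traceR_nonneg hA).lt_of_ne' (mt (traceR_eq_zero_iff hA).1 h0)

lemma posSemidef_real_smul {A : Mat n} (hA : A.PosSemidef) {c : ℝ} (hc : 0 ≤ c) :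
    (c • A).PosSemidef := by
  rw [← Complex.coe_smul]
  exact hA.smul (Complex.zero_le_real.2 hc)

open scoped MatrixOrder in
lemma exists_eq_conjTranspose_mul_self {k : Type*} [Fintype k] {M : Matrix k k ℂ}
    (hM : M.PosSemidef) : ∃ B : Matrix k k ℂ, M = Bᴴ * B :=
  CStarAlgebra.nonneg_iff_eq_star_mul_self.1 hM.nonneg

lemma traceR_mul_nonneg {A B : Mat n} (hA : A.PosSemidef) (hB : B.PosSemidef) :
    0 ≤ traceR (A * B) := by
  obtain ⟨C, rfl⟩ := exists_eq_conjTranspose_mul_self hB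
  rw [← mul_assoc, traceR_mul_comm, ← mul_assoc]
  exact traceR_nonneg (hA.mul_mul_conjTranspose_same C)

lemma continuousOn_spectrum (f : ℝ → ℝ) (A : Mat n) : ContinuousOn f (spectrum ℝ A) :=
  A.finite_real_spectrum.continuousOn f

lemma cfc_mul_cfc (f g : ℝ → ℝ) (A : Mat n) :
    cfc f A * cfc g A = cfc (fun x => f x * g x) A :=
  (cfc_mul f g A (continuousOn_spectrum f A) (continuousOn_spectrum g A)).symm

lemma cfc_cfc {A : Mat n} (hA : A.IsHermitian) (f g : ℝ → ℝ) :
    cfc f (cfc g A) = cfc (fun x => f (g x)) A :=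
  (cfc_comp' f g A ((A.finite_real_spectrum.image g).continuousOn f)
    (continuousOn_spectrum g A) hA.isSelfAdjoint).symm

lemma spectrum_nonneg {A : Mat n} (hA : A.PosSemidef) : ∀ x ∈ spectrum ℝ A, 0 ≤ x := by
  rw [hA.1.spectrum_real_eq_range_eigenvalues]
  rintro _ ⟨i, rfl⟩
  exact hA.eigenvalues_nonneg i

lemma cfc_eq_conj_diagonal {A : Mat n} (hA : A.IsHermitian) (f : ℝ → ℝ) :
    cfc f A = (hA.eigenvectorUnitary : Mat n) *
      diagonal (fun i => (f (hA.eigenvalues i) : ℂ)) * star (hA.eigenvectorUnitary : Mat n) := by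
  rw [hA.cfc_eq, IsHermitian.cfc, Unitary.conjStarAlgAut_apply]
  rfl

open scoped MatrixOrder in
lemma posSemidef_cfc {A : Mat n} {f : ℝ → ℝ} (hf : ∀ x ∈ spectrum ℝ A, 0 ≤ f x) :
    (cfc f A).PosSemidef :=
  Matrix.nonneg_iff_posSemidef.1 (cfc_nonneg hf)

lemma traceR_cfc {A : Mat n} (hA : A.IsHermitian) (f : ℝ → ℝ) :
    traceR (cfc f A) = ∑ i, f (hA.eigenvalues i) := by
  rw [cfc_eq_conj_diagonal hA, traceR, trace_mul_cycle, Unitary.coe_star_mul_self, one_mul,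
    trace_diagonal, Complex.re_sum]
  simp only [Complex.ofReal_re]

lemma traceR_cfc_conjTranspose_mul_self (f : ℝ → ℝ) (C : Mat n) :
    traceR (cfc f (Cᴴ * C)) = traceR (cfc f (C * Cᴴ)) := by
  have h₁ := isHermitian_conjTranspose_mul_self C
  have h₂ := isHermitian_mul_conjTranspose_self C
  have hroots : Multiset.map (RCLike.ofReal ∘ h₁.eigenvalues : n → ℂ) Finset.univ.val =
      Multiset.map (RCLike.ofReal ∘ h₂.eigenvalues) Finset.univ.val := by
    rw [← h₁.roots_charpoly_eq_eigenvalues, charpoly_mul_comm, h₂.roots_charpoly_eq_eigenvalues]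
  have hsum := congrArg (fun s => (s.map fun z : ℂ => f z.re).sum) hroots
  simp only [Multiset.map_map, Function.comp_def, RCLike.ofReal_eq_complex_ofReal,
    Complex.ofReal_re] at hsum
  rw [traceR_cfc h₁, traceR_cfc h₂]
  exact hsum

lemma real_smul_mem {N : StarSubalgebra ℂ (Mat n)} {A : Mat n} (hA : A ∈ N) (c : ℝ) :
    c • A ∈ N := by
  rw [← Complex.coe_smul]
  exact N.toSubalgebra.smul_mem hA _

lemma cfc_mem {N : StarSubalgebra ℂ (Mat n)} {A : Mat n} (hA : A.IsHermitian) (hN : A ∈ N)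
    (f : ℝ → ℝ) : cfc f A ∈ N := by
  let q := Lagrange.interpolate A.finite_real_spectrum.toFinset id f
  have hq : cfc f A = cfc (fun x => q.eval x) A := cfc_congr fun x hx =>
    (Lagrange.eval_interpolate_at_node f Function.injective_id.injOn
      (A.finite_real_spectrum.mem_toFinset.2 hx)).symm
  rw [hq, cfc_polynomial q A hA.isSelfAdjoint, Polynomial.aeval_eq_sum_range]
  exact sum_mem fun i _ => real_smul_mem (pow_mem hN i) _

open scoped Matrix.Norms.L2Operator in
lemma continuousOn_cfc {f : ℝ → ℝ} (hf : Continuous f) :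
    ContinuousOn (fun A : Mat n => cfc f A) {A | A.IsHermitian} :=
  ContinuousOn.cfc_of_mem_nhdsSet (s := Set.univ) f (by simp) continuousOn_id
    (fun A (hA : A.IsHermitian) => hA.isSelfAdjoint) hf.continuousOn

lemma isClosed_posSemidef {k : Type*} : IsClosed {A : Matrix k k ℂ | A.PosSemidef} := by
  simp only [PosSemidef, Finsupp.sum, Set.ofPred_and, Set.ofPred_forall]
  exact (isClosed_eq (by fun_prop) continuous_id).inter
    (isClosed_iInter fun x => isClosed_le continuous_const (by fun_prop))

lemma posSemidef_traceR_smul_one_sub {A : Mat n} (hA : A.PosSemidef) :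
    (traceR A • (1 : Mat n) - A).PosSemidef := by
  have h : traceR A • (1 : Mat n) - A = cfc (fun x => traceR A - x) A := by
    rw [cfc_sub (fun _ => traceR A) (fun x => x) A (continuousOn_spectrum _ A)
      (continuousOn_spectrum _ A), cfc_const _ A hA.1.isSelfAdjoint, cfc_id' ℝ A hA.1.isSelfAdjoint,
      Algebra.algebraMap_eq_smul_one]
  rw [h]
  refine posSemidef_cfc fun x hx => ?_
  rw [hA.1.spectrum_real_eq_range_eigenvalues] at hx
  obtain ⟨i, rfl⟩ := hx
  have htr := traceR_cfc hA.1 (fun x => x)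
  rw [cfc_id' ℝ A hA.1.isSelfAdjoint] at htr
  rw [htr, sub_nonneg]
  exact Finset.single_le_sum (fun j _ => hA.eigenvalues_nonneg j) (Finset.mem_univ i)

open scoped Matrix.Norms.L2Operator MatrixOrder in
lemma isCompact_posSemidef_traceR_le (c : ℝ) :
    IsCompact {A : Mat n | A.PosSemidef ∧ traceR A ≤ c} := by
  have : ProperSpace (Mat n) := FiniteDimensional.proper ℂ _
  refine Metric.isCompact_of_isClosed_isBounded
    (isClosed_posSemidef.inter (isClosed_le continuous_traceR continuous_const))
    ((Metric.isBounded_closedBall (x := 0) (r := c)).subset ?_)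
  rintro A ⟨hA, hAc⟩
  have hle : A ≤ algebraMap ℝ (Mat n) (traceR A) := by
    rw [Algebra.algebraMap_eq_smul_one]
    exact Matrix.le_iff.2 (posSemidef_traceR_smul_one_sub hA)
  rw [mem_closedBall_zero_iff]
  exact ((CStarAlgebra.norm_le_iff_le_algebraMap A (traceR_nonneg hA) hA.nonneg).2 hle).trans hAc

/-! ### Supports and tangent inequalities for traces -/

/-- The projection onto the kernel of a Hermitian matrix. It turns the support condition
`suppLe ρ σ` into the equation `ρ * kerProj σ = 0`. -/
def kerProj (A : Mat n) : Mat n := cfc (fun x : ℝ => if x = 0 then 1 else 0) A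

lemma mul_cfc {A : Mat n} (hA : A.IsHermitian) (f : ℝ → ℝ) :
    A * cfc f A = cfc (fun x => x * f x) A := by
  conv_lhs => enter [1]; rw [← cfc_id' ℝ A hA.isSelfAdjoint]
  exact cfc_mul_cfc _ f A

lemma mul_kerProj {A : Mat n} (hA : A.IsHermitian) : A * kerProj A = 0 := by
  rw [kerProj, mul_cfc hA, ← cfc_zero ℝ A]
  exact cfc_congr fun x _ => by by_cases hx : x = 0 <;> simp [hx]

lemma kerProj_mul_self (A : Mat n) : kerProj A * kerProj A = kerProj A := by
  rw [kerProj, cfc_mul_cfc]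
  exact cfc_congr fun x _ => by simp

lemma posSemidef_kerProj (A : Mat n) : (kerProj A).PosSemidef :=
  posSemidef_cfc fun x _ => by positivity

lemma kerProj_mem {N : StarSubalgebra ℂ (Mat n)} {A : Mat n} (hA : A.IsHermitian) (hN : A ∈ N) :
    kerProj A ∈ N :=
  cfc_mem hA hN _

lemma mul_eq_zero_of_suppLe {k : Type*} {ρ σ : Mat n} (h : suppLe ρ σ) {C : Matrix n k ℂ}
    (hC : σ * C = 0) : ρ * C = 0 := by
  ext i j
  have hcol : σ *ᵥ C.col j = 0 := funext fun i => congrFun (congrFun hC i) j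
  exact congrFun (h _ hcol) i

lemma suppLe_trans {ρ σ τ : Mat n} (h₁ : suppLe ρ σ) (h₂ : suppLe σ τ) : suppLe ρ τ :=
  fun v hv => h₁ v (h₂ v hv)

lemma suppLe_of_eq_mul {ρ σ : Mat n} (L : Mat n) (h : ρ = L * σ) : suppLe ρ σ := by
  intro v hv
  rw [h, ← mulVec_mulVec, hv, mulVec_zero]

lemma suppLe_iff_mul_kerProj {ρ σ : Mat n} (hσ : σ.IsHermitian) :
    suppLe ρ σ ↔ ρ * kerProj σ = 0 := by
  refine ⟨fun h => mul_eq_zero_of_suppLe h (mul_kerProj hσ), fun h => ?_⟩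
  have hdecomp : kerProj σ + cfc (fun x : ℝ => x⁻¹) σ * σ = 1 := by
    conv_lhs => enter [2, 2]; rw [← cfc_id' ℝ σ hσ.isSelfAdjoint]
    rw [cfc_mul_cfc, kerProj, ← cfc_add σ _ _ (continuousOn_spectrum _ σ)
      (continuousOn_spectrum _ σ), ← cfc_const_one ℝ σ hσ.isSelfAdjoint]
    exact cfc_congr fun x _ => by by_cases hx : x = 0 <;> simp [hx]
  refine suppLe_of_eq_mul (ρ * cfc (fun x : ℝ => x⁻¹) σ) ?_
  calc ρ = ρ * (kerProj σ + cfc (fun x : ℝ => x⁻¹) σ * σ) := by rw [hdecomp, mul_one]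
    _ = ρ * cfc (fun x : ℝ => x⁻¹) σ * σ := by rw [mul_add, h, zero_add, mul_assoc]

lemma suppLe_iff_traceR_mul_kerProj {ρ σ : Mat n} (hρ : ρ.PosSemidef) (hσ : σ.IsHermitian) :
    suppLe ρ σ ↔ traceR (ρ * kerProj σ) = 0 := by
  rw [suppLe_iff_mul_kerProj hσ]
  refine ⟨fun h => by simp [h, traceR], fun h => ?_⟩
  have hconj : (kerProj σ * ρ * kerProj σ).PosSemidef := by
    simpa only [(posSemidef_kerProj σ).1.eq] using hρ.mul_mul_conjTranspose_same (kerProj σ)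
  have htr : traceR (kerProj σ * ρ * kerProj σ) = 0 := by
    rw [mul_assoc, traceR_mul_comm, mul_assoc, kerProj_mul_self, h]
  obtain ⟨C, rfl⟩ := exists_eq_conjTranspose_mul_self hρ
  have hC : (C * kerProj σ)ᴴ * (C * kerProj σ) = 0 := by
    rw [conjTranspose_mul, (posSemidef_kerProj σ).1.eq, ← (traceR_eq_zero_iff hconj).1 htr]
    simp only [mul_assoc]
  rw [mul_assoc, conjTranspose_mul_self_eq_zero.1 hC, mul_zero]

lemma mul_cfc_congr_of_suppLe {ρ σ : Mat n} (hσ : σ.IsHermitian) (h : suppLe ρ σ) {f g : ℝ → ℝ}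
    (hfg : ∀ x ∈ spectrum ℝ σ, x ≠ 0 → f x = g x) : ρ * cfc f σ = ρ * cfc g σ := by
  rw [← sub_eq_zero, ← mul_sub, ← cfc_sub f g σ (continuousOn_spectrum f σ)
    (continuousOn_spectrum g σ)]
  refine mul_eq_zero_of_suppLe h ?_
  rw [mul_cfc hσ, ← cfc_zero ℝ σ]
  refine cfc_congr fun x hx => ?_
  by_cases hx0 : x = 0
  · simp [hx0]
  · simp [hfg x hx hx0]

/-- The transition probability `|⟨uᵢ, vⱼ⟩|²` between the eigenbases of two Hermitian matrices.
With it, trace inequalities reduce to scalar inequalities between the eigenvalues. -/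
def overlap {A B : Mat n} (hA : A.IsHermitian) (hB : B.IsHermitian) (i j : n) : ℝ :=
  Complex.normSq ((star (hA.eigenvectorUnitary : Mat n) * hB.eigenvectorUnitary) i j)

section Overlap

variable {A B : Mat n} (hA : A.IsHermitian) (hB : B.IsHermitian)

lemma overlap_nonneg (i j : n) : 0 ≤ overlap hA hB i j := Complex.normSq_nonneg _

lemma traceR_cfc_mul_cfc (f g : ℝ → ℝ) :
    traceR (cfc f A * cfc g B) =
      ∑ i, ∑ j, overlap hA hB i j * (f (hA.eigenvalues i) * g (hB.eigenvalues j)) := by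
  set W : Mat n := star (hA.eigenvectorUnitary : Mat n) * hB.eigenvectorUnitary with hW
  have hconj : traceR (cfc f A * cfc g B) =
      traceR (diagonal (fun i => (f (hA.eigenvalues i) : ℂ)) *
        (W * diagonal (fun j => (g (hB.eigenvalues j) : ℂ)) * star W)) := by
    rw [cfc_eq_conj_diagonal hA, cfc_eq_conj_diagonal hB, mul_assoc (hA.eigenvectorUnitary : Mat n),
      mul_assoc (hA.eigenvectorUnitary : Mat n), traceR_mul_comm, hW, star_mul, star_star]
    simp only [mul_assoc]
  have hdiag : ∀ i, (W * diagonal (fun j => (g (hB.eigenvalues j) : ℂ)) * star W) i i =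
      ∑ j, (overlap hA hB i j : ℂ) * g (hB.eigenvalues j) := fun i => by
    rw [mul_apply]
    refine Finset.sum_congr rfl fun j _ => ?_
    rw [mul_diagonal, star_apply, overlap, ← hW, Complex.normSq_eq_conj_mul_self, RCLike.star_def]
    ring
  rw [hconj, traceR, trace, Complex.re_sum]
  refine Finset.sum_congr rfl fun i _ => ?_
  rw [diag_apply, diagonal_mul, hdiag, Finset.mul_sum, Complex.re_sum]
  refine Finset.sum_congr rfl fun j _ => ?_
  norm_cast
  ring

lemma traceR_tangent_eq_sum_overlap (φ m : ℝ → ℝ) :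
    traceR (cfc φ A) - (traceR (cfc φ B) + traceR ((A - B) * cfc m B)) =
      ∑ i, ∑ j, overlap hA hB i j * (φ (hA.eigenvalues i) - (φ (hB.eigenvalues j) +
        (hA.eigenvalues i - hB.eigenvalues j) * m (hB.eigenvalues j))) := by
  have hφA := traceR_cfc_mul_cfc hA hB φ (fun _ => 1)
  have hφB := traceR_cfc_mul_cfc hA hB (fun _ => 1) φ
  have hAm := traceR_cfc_mul_cfc hA hB (fun x => x) m
  have hBm := traceR_cfc_mul_cfc hA hB (fun _ => 1) (fun y => y * m y)
  rw [cfc_const_one ℝ B hB.isSelfAdjoint, mul_one] at hφA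
  rw [cfc_const_one ℝ A hA.isSelfAdjoint, one_mul] at hφB hBm
  rw [cfc_id' ℝ A hA.isSelfAdjoint] at hAm
  rw [sub_mul, traceR_sub, mul_cfc hB, hφA, hφB, hAm, hBm]
  simp only [← Finset.sum_sub_distrib, ← Finset.sum_add_distrib]
  exact Finset.sum_congr rfl fun i _ => Finset.sum_congr rfl fun j _ => by ring

lemma eq_of_overlap (h : ∀ i j, overlap hA hB i j ≠ 0 → hA.eigenvalues i = hB.eigenvalues j) :
    A = B := by
  have hsum := traceR_tangent_eq_sum_overlap hA hB (fun x => x ^ 2) (fun y => 2 * y)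
  rw [Finset.sum_eq_zero fun i _ => Finset.sum_eq_zero fun j _ => ?_,
    cfc_pow_id (R := ℝ) A 2 hA.isSelfAdjoint, cfc_pow_id (R := ℝ) B 2 hB.isSelfAdjoint,
    cfc_const_mul_id (R := ℝ) 2 B hB.isSelfAdjoint] at hsum
  · have hsq : traceR ((A - B)ᴴ * (A - B)) = 0 := by
      rw [← hsum, conjTranspose_sub, hA.eq, hB.eq]
      simp only [sub_mul, mul_sub, traceR_sub, mul_smul_comm, traceR_smul, traceR_mul_comm B A, sq]
      ring
    rw [traceR_eq_zero_iff (posSemidef_conjTranspose_mul_self _),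
      conjTranspose_mul_self_eq_zero] at hsq
    exact sub_eq_zero.1 hsq
  · by_cases hij : overlap hA hB i j = 0
    · rw [hij, zero_mul]
    · rw [h i j hij]; ring

lemma eigenvalue_eq_zero_of_suppLe (hAB : suppLe A B) {i j : n} (hij : overlap hA hB i j ≠ 0)
    (hj : hB.eigenvalues j = 0) : hA.eigenvalues i = 0 := by
  have hsum := traceR_cfc_mul_cfc hA hB (fun x => x ^ 2) (fun y => if y = 0 then 1 else 0)
  have hzero : traceR (cfc (fun x : ℝ => x ^ 2) A * kerProj B) = 0 := by
    rw [cfc_pow_id (R := ℝ) A 2 hA.isSelfAdjoint, sq, mul_assoc,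
      (suppLe_iff_mul_kerProj hB).1 hAB, mul_zero]
    simp [traceR]
  have hnonneg : ∀ i j, 0 ≤ overlap hA hB i j *
      (hA.eigenvalues i ^ 2 * if hB.eigenvalues j = 0 then 1 else 0) := fun i j =>
    mul_nonneg (overlap_nonneg hA hB i j) (by positivity)
  rw [kerProj] at hzero
  rw [hzero, eq_comm, Finset.sum_eq_zero_iff_of_nonneg fun i _ =>
    Finset.sum_nonneg fun j _ => hnonneg i j] at hsum
  have hij0 := (Finset.sum_eq_zero_iff_of_nonneg fun j _ => hnonneg i j).1
    (hsum i (Finset.mem_univ i)) j (Finset.mem_univ j)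
  simpa [hij, hj] using hij0

end Overlap

lemma tangent_le_of_convexOn {S : Set ℝ} {φ : ℝ → ℝ} {φ' x y : ℝ} (hφ : ConvexOn ℝ S φ)
    (hx : x ∈ S) (hy : y ∈ S) (hd : HasDerivAt φ φ' y) : φ y + (x - y) * φ' ≤ φ x := by
  rcases lt_trichotomy x y with hxy | rfl | hxy
  · have hs := hφ.slope_le_of_hasDerivAt hx hy hxy hd
    rw [slope_def_field, div_le_iff₀ (sub_pos.2 hxy)] at hs
    linarith
  · simp
  · have hs := hφ.le_slope_of_hasDerivAt hy hx hxy hd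
    rw [slope_def_field, le_div_iff₀ (sub_pos.2 hxy)] at hs
    linarith

lemma tangent_lt_of_strictConvexOn {S : Set ℝ} {φ : ℝ → ℝ} {φ' x y : ℝ}
    (hφ : StrictConvexOn ℝ S φ) (hx : x ∈ S) (hy : y ∈ S) (hxy : x ≠ y) (hd : HasDerivAt φ φ' y) :
    φ y + (x - y) * φ' < φ x := by
  rcases hxy.lt_or_gt with hxy | hxy
  · have hs := hφ.slope_lt_of_hasDerivAt hx hy hxy hd
    rw [slope_def_field, div_lt_iff₀ (sub_pos.2 hxy)] at hs
    linarith
  · have hs := hφ.lt_slope_of_hasDerivAt hy hx hxy hd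
    rw [slope_def_field, lt_div_iff₀ (sub_pos.2 hxy)] at hs
    linarith

section Klein

variable {A B : Mat n} {φ φ' : ℝ → ℝ}

theorem traceR_tangent_le (hA : A.PosSemidef) (hB : B.PosSemidef) (hφ : ConvexOn ℝ (Set.Ici 0) φ)
    (hd : ∀ y, 0 ≤ y → HasDerivAt φ (φ' y) y) :
    traceR (cfc φ B) + traceR ((A - B) * cfc φ' B) ≤ traceR (cfc φ A) := by
  rw [← sub_nonneg, traceR_tangent_eq_sum_overlap hA.1 hB.1]
  exact Finset.sum_nonneg fun i _ => Finset.sum_nonneg fun j _ =>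
    mul_nonneg (overlap_nonneg hA.1 hB.1 i j)
      (sub_nonneg.2 (tangent_le_of_convexOn hφ (hA.eigenvalues_nonneg i) (hB.eigenvalues_nonneg j)
        (hd _ (hB.eigenvalues_nonneg j))))

theorem traceR_tangent_lt (hA : A.PosSemidef) (hB : B.PosSemidef)
    (hφ : StrictConvexOn ℝ (Set.Ici 0) φ) (hd : ∀ y, 0 < y → HasDerivAt φ (φ' y) y)
    (hAB : suppLe A B) (hne : A ≠ B) :
    traceR (cfc φ B) + traceR ((A - B) * cfc φ' B) < traceR (cfc φ A) := by
  have hterm : ∀ i j, overlap hA.1 hB.1 i j ≠ 0 → hA.1.eigenvalues i ≠ hB.1.eigenvalues j →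
      φ (hB.1.eigenvalues j) + (hA.1.eigenvalues i - hB.1.eigenvalues j) * φ' (hB.1.eigenvalues j) <
        φ (hA.1.eigenvalues i) := fun i j hij hab => by
    refine tangent_lt_of_strictConvexOn hφ (hA.eigenvalues_nonneg i) (hB.eigenvalues_nonneg j) hab
      (hd _ ((hB.eigenvalues_nonneg j).lt_of_ne' fun hb => hab ?_))
    rw [eigenvalue_eq_zero_of_suppLe hA.1 hB.1 hAB hij hb, hb]
  have hnonneg : ∀ i j, 0 ≤ overlap hA.1 hB.1 i j * (φ (hA.1.eigenvalues i) -
      (φ (hB.1.eigenvalues j) + (hA.1.eigenvalues i - hB.1.eigenvalues j) *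
        φ' (hB.1.eigenvalues j))) := fun i j => by
    by_cases hij : overlap hA.1 hB.1 i j = 0
    · rw [hij, zero_mul]
    refine mul_nonneg (overlap_nonneg hA.1 hB.1 i j) (sub_nonneg.2 ?_)
    by_cases hab : hA.1.eigenvalues i = hB.1.eigenvalues j
    · rw [hab, sub_self, zero_mul, add_zero]
    · exact (hterm i j hij hab).le
  obtain ⟨i, j, hij, hab⟩ : ∃ i j, overlap hA.1 hB.1 i j ≠ 0 ∧
      hA.1.eigenvalues i ≠ hB.1.eigenvalues j := by
    by_contra! hcon
    exact hne (eq_of_overlap hA.1 hB.1 hcon)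
  rw [← sub_pos, traceR_tangent_eq_sum_overlap hA.1 hB.1]
  refine Finset.sum_pos' (fun i _ => Finset.sum_nonneg fun j _ => hnonneg i j)
    ⟨i, Finset.mem_univ i, Finset.sum_pos' (fun j _ => hnonneg i j) ⟨j, Finset.mem_univ j, ?_⟩⟩
  exact mul_pos ((overlap_nonneg hA.1 hB.1 i j).lt_of_ne' hij) (sub_pos.2 (hterm i j hij hab))

end Klein

/-! ### Convexity of traces of powers -/

lemma suppLe_add_left {X Y : Mat n} (hX : X.PosSemidef) (hY : Y.PosSemidef) :
    suppLe X (X + Y) := by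
  intro v hv
  have hsum : star v ⬝ᵥ X *ᵥ v + star v ⬝ᵥ Y *ᵥ v = 0 := by
    rw [← dotProduct_add, ← add_mulVec, hv, dotProduct_zero]
  exact (hX.dotProduct_mulVec_zero_iff v).1
    ((add_eq_zero_iff_of_nonneg (hX.dotProduct_mulVec_nonneg v)
      (hY.dotProduct_mulVec_nonneg v)).1 hsum).1

lemma suppLe_smul_left {X Y : Mat n} {a : ℝ} (ha : a ≠ 0) (h : suppLe (a • X) Y) :
    suppLe X Y := fun v hv => by
  have hav := h v hv
  rw [smul_mulVec] at hav
  exact (smul_eq_zero.1 hav).resolve_left ha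

lemma suppLe_convexCombination {X Y : Mat n} (hX : X.PosSemidef) (hY : Y.PosSemidef) {a b : ℝ}
    (ha : 0 < a) (hb : 0 ≤ b) : suppLe X (a • X + b • Y) :=
  suppLe_smul_left ha.ne'
    (suppLe_add_left (posSemidef_real_smul hX ha.le) (posSemidef_real_smul hY hb))

lemma convex_posSemidef : Convex ℝ {A : Mat n | A.PosSemidef} := fun _ hX _ hY _ _ ha hb _ =>
  (posSemidef_real_smul hX ha).add (posSemidef_real_smul hY hb)

theorem strictConvexOn_traceR_cfc {φ : ℝ → ℝ} (hφ : StrictConvexOn ℝ (Set.Ici 0) φ)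
    (hd : ∀ y, 0 < y → DifferentiableAt ℝ φ y) :
    StrictConvexOn ℝ {A : Mat n | A.PosSemidef} fun A => traceR (cfc φ A) := by
  refine ⟨convex_posSemidef, fun X hX Y hY hXY a b ha hb hab => ?_⟩
  set Z := a • X + b • Y with hZdef
  have hZ : Z.PosSemidef := convex_posSemidef hX hY ha.le hb.le hab
  have hZX : X - Z = b • (X - Y) := by
    rw [hZdef, eq_sub_of_add_eq hab]
    module
  have hZY : Y - Z = a • (Y - X) := by
    rw [hZdef, eq_sub_of_add_eq' hab]
    module
  have hXZ : X ≠ Z := sub_ne_zero.1 (hZX ▸ smul_ne_zero hb.ne' (sub_ne_zero.2 hXY))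
  have hYZ : Y ≠ Z := sub_ne_zero.1 (hZY ▸ smul_ne_zero ha.ne' (sub_ne_zero.2 hXY.symm))
  have hsX : suppLe X Z := suppLe_convexCombination hX hY ha hb.le
  have hsY : suppLe Y Z := by
    rw [hZdef, add_comm]
    exact suppLe_convexCombination hY hX hb ha.le
  have hd' : ∀ y, 0 < y → HasDerivAt φ (deriv φ y) y := fun y hy => (hd y hy).hasDerivAt
  have htX := mul_lt_mul_of_pos_left (traceR_tangent_lt hX hZ hφ hd' hsX hXZ) ha
  have htY := mul_lt_mul_of_pos_left (traceR_tangent_lt hY hZ hφ hd' hsY hYZ) hb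
  have hlin : a * traceR ((X - Z) * cfc (deriv φ) Z) + b * traceR ((Y - Z) * cfc (deriv φ) Z) =
      0 := by
    have hzero : a • (X - Z) + b • (Y - Z) = 0 := by
      rw [hZX, hZY]
      module
    rw [← traceR_smul, ← traceR_smul, ← traceR_add, ← smul_mul_assoc, ← smul_mul_assoc, ← add_mul,
      hzero, zero_mul]
    simp [traceR]
  have hsplit : traceR (cfc φ Z) = a * traceR (cfc φ Z) + b * traceR (cfc φ Z) := by
    rw [← add_mul, hab, one_mul]
  simp only [smul_eq_mul]
  linarith

section Power

variable {A B : Mat n} {r u : ℝ}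

lemma posSemidef_mpow (hA : A.PosSemidef) (r : ℝ) : (mpow A r).PosSemidef :=
  posSemidef_cfc fun x hx => Real.rpow_nonneg (spectrum_nonneg hA x hx) r

lemma mpow_mul_mpow (hA : A.PosSemidef) (h : r + u ≠ 0) :
    mpow A r * mpow A u = mpow A (r + u) := by
  rw [mpow, mpow, cfc_mul_cfc]
  exact cfc_congr fun x hx => (Real.rpow_add' (spectrum_nonneg hA x hx) h).symm

lemma mpow_mpow (hA : A.PosSemidef) (r u : ℝ) : mpow (mpow A r) u = mpow A (r * u) := by
  rw [mpow, mpow, cfc_cfc hA.1]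
  exact cfc_congr fun x hx => (Real.rpow_mul (spectrum_nonneg hA x hx) r u).symm

lemma mpow_one (hA : A.IsHermitian) : mpow A 1 = A := by
  simp only [mpow, Real.rpow_one, cfc_id' ℝ A hA.isSelfAdjoint]

lemma mpow_half_mul_mpow_half (hA : A.PosSemidef) : mpow A (1 / 2) * mpow A (1 / 2) = A := by
  rw [mpow_mul_mpow hA (by norm_num), add_halves, mpow_one hA.1]

lemma mpow_smul (hA : A.PosSemidef) {c : ℝ} (hc : 0 ≤ c) (r : ℝ) :
    mpow (c • A) r = c ^ r • mpow A r := by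
  have hcA : c • A = cfc (fun x => c * x) A := by
    rw [cfc_const_mul_id c A hA.1.isSelfAdjoint]
  rw [hcA, mpow, mpow, cfc_cfc hA.1, ← cfc_smul _ _ A (continuousOn_spectrum _ A)]
  exact cfc_congr fun x hx => Real.mul_rpow hc (spectrum_nonneg hA x hx)

lemma mpow_injOn (hr : r ≠ 0) : Set.InjOn (fun A : Mat n => mpow A r) {A | A.PosSemidef} :=
  fun A hA B hB h => by
    rw [← mpow_one hA.1, ← mpow_one hB.1, ← mul_inv_cancel₀ hr, ← mpow_mpow hA, ← mpow_mpow hB]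
    exact congrArg (mpow · r⁻¹) h

lemma suppLe_self_mpow (hA : A.PosSemidef) (r : ℝ) : suppLe A (mpow A r) :=
  suppLe_of_eq_mul (mpow A (1 - r)) <| by
    rw [mpow_mul_mpow hA (by simp), sub_add_cancel, mpow_one hA.1]

lemma suppLe_mpow_self (hA : A.PosSemidef) (hr : r ≠ 0) : suppLe (mpow A r) A :=
  suppLe_of_eq_mul (mpow A (r - 1)) <| by
    nth_rw 3 [← mpow_one hA.1]
    rw [mpow_mul_mpow hA (by simpa using hr), sub_add_cancel]

theorem strictConvexOn_traceR_mpow (hr : 1 < r) :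
    StrictConvexOn ℝ {A : Mat n | A.PosSemidef} fun A => traceR (mpow A r) :=
  strictConvexOn_traceR_cfc (strictConvexOn_rpow hr) fun _ hy =>
    (Real.hasDerivAt_rpow_const (Or.inl hy.ne')).differentiableAt

theorem strictConcaveOn_traceR_mpow (hr₀ : 0 < r) (hr₁ : r < 1) :
    StrictConcaveOn ℝ {A : Mat n | A.PosSemidef} fun A => traceR (mpow A r) := by
  have h := strictConvexOn_traceR_cfc (n := n) (Real.strictConcaveOn_rpow hr₀ hr₁).neg fun y hy =>
    (Real.hasDerivAt_rpow_const (Or.inl hy.ne')).differentiableAt.neg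
  refine neg_strictConvexOn_iff.1 (h.congr fun A _ => ?_)
  simp only [mpow, Pi.neg_def, cfc_neg, traceR, trace_neg, Complex.neg_re]

lemma traceR_tangent_mpow_le (hA : A.PosSemidef) (hB : B.PosSemidef) (hr : 1 ≤ r) :
    traceR (mpow B r) + traceR ((A - B) * cfc (fun y : ℝ => r * y ^ (r - 1)) B) ≤
      traceR (mpow A r) :=
  traceR_tangent_le hA hB (convexOn_rpow hr) fun _ _ => Real.hasDerivAt_rpow_const (Or.inr hr)

lemma traceR_mpow_mono (hr : 1 ≤ r) (hA : A.PosSemidef) (hAB : (B - A).PosSemidef) :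
    traceR (mpow A r) ≤ traceR (mpow B r) := by
  have hB : B.PosSemidef := by simpa using hAB.add hA
  refine le_trans (le_add_of_nonneg_right (traceR_mul_nonneg hAB (posSemidef_cfc fun y hy => ?_)))
    (traceR_tangent_mpow_le hB hA hr)
  have := spectrum_nonneg hA y hy
  positivity

lemma mul_traceR_le_traceR_mpow (hr : 1 ≤ r) (hA : A.PosSemidef) :
    r * traceR A ≤ traceR (mpow A r) + (r - 1) * Fintype.card n := by
  have hone : ∀ f : ℝ → ℝ, cfc f (1 : Mat n) = f 1 • 1 := fun f => by
    rw [cfc_apply_one, Algebra.algebraMap_eq_smul_one]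
  have htr : traceR (1 : Mat n) = Fintype.card n := by simp [traceR]
  have h := traceR_tangent_mpow_le hA PosSemidef.one hr
  rw [mpow, hone, hone, mul_smul_comm, mul_one, traceR_smul, traceR_smul, traceR_sub, htr,
    Real.one_rpow, Real.one_rpow] at h
  linarith

end Power

/-! ### The Rényi trace and Schur complements -/

/-- The trace functional `Q_p(ρ‖σ) = Tr ((σ^{(1-p)/2p} ρ σ^{(1-p)/2p})^p)` inside the sandwiched
Rényi relative entropy. -/
def renyiTrace (p : ℝ) (ρ σ : Mat n) : ℝ := traceR (mpow (sandwich p ρ σ) p)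

lemma mul_mpow_mul_mpow_neg {ρ σ : Mat n} (hσ : σ.PosSemidef) (h : suppLe ρ σ) (r : ℝ) :
    ρ * mpow σ r * mpow σ (-r) = ρ := by
  rw [mul_assoc, mpow, mpow, cfc_mul_cfc,
    mul_cfc_congr_of_suppLe hσ.1 h (g := fun _ => 1) fun x hx hx0 => ?_,
    cfc_const_one ℝ σ hσ.1.isSelfAdjoint, mul_one]
  rw [← Real.rpow_add ((spectrum_nonneg hσ x hx).lt_of_ne' hx0), add_neg_cancel, Real.rpow_zero]

lemma mpow_zero_left {r : ℝ} (hr : r ≠ 0) : mpow (0 : Mat n) r = 0 := by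
  rw [mpow, cfc_apply_zero, Real.zero_rpow hr, map_zero]

section RenyiTrace

variable {ρ σ : Mat n} {p : ℝ}

lemma posSemidef_sandwich (hρ : ρ.PosSemidef) (hσ : σ.PosSemidef) (p : ℝ) :
    (sandwich p ρ σ).PosSemidef := by
  have h := hρ.mul_mul_conjTranspose_same (mpow σ ((1 - p) / (2 * p)))
  rwa [(posSemidef_mpow hσ _).1.eq] at h

lemma renyiTrace_nonneg (hρ : ρ.PosSemidef) (hσ : σ.PosSemidef) : 0 ≤ renyiTrace p ρ σ :=
  traceR_nonneg (posSemidef_mpow (posSemidef_sandwich hρ hσ p) p)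

lemma renyiTrace_eq_traceR_half_conj (hρ : ρ.PosSemidef) (hσ : σ.PosSemidef) (hp₀ : p ≠ 0)
    (hp₁ : p ≠ 1) : renyiTrace p ρ σ =
      traceR (mpow (mpow ρ (1 / 2) * mpow σ ((1 - p) / p) * (mpow ρ (1 / 2))ᴴ) p) := by
  have hhalf : (1 - p) / (2 * p) + (1 - p) / (2 * p) = (1 - p) / p := by field_simp; ring
  have hne : (1 - p) / (2 * p) + (1 - p) / (2 * p) ≠ 0 := by
    rw [hhalf]
    exact div_ne_zero (sub_ne_zero.2 hp₁.symm) hp₀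
  set C := mpow ρ (1 / 2) * mpow σ ((1 - p) / (2 * p)) with hC
  have hCC : Cᴴ * C = sandwich p ρ σ := by
    rw [hC, conjTranspose_mul, (posSemidef_mpow hσ _).1.eq, (posSemidef_mpow hρ _).1.eq, sandwich,
      mul_assoc, ← mul_assoc (mpow ρ (1 / 2)), mpow_half_mul_mpow_half hρ, mul_assoc]
  have hCC' : C * Cᴴ = mpow ρ (1 / 2) * mpow σ ((1 - p) / p) * (mpow ρ (1 / 2))ᴴ := by
    rw [hC, conjTranspose_mul, (posSemidef_mpow hσ _).1.eq, mul_assoc,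
      ← mul_assoc (mpow σ ((1 - p) / (2 * p))), mpow_mul_mpow hσ hne, hhalf, mul_assoc]
  rw [renyiTrace, ← hCC, ← hCC']
  exact traceR_cfc_conjTranspose_mul_self _ C

lemma renyiTrace_smul (hρ : ρ.PosSemidef) (hσ : σ.PosSemidef) (hp : p ≠ 0) {c : ℝ} (hc : 0 < c) :
    renyiTrace p ρ (c • σ) = c ^ (1 - p) * renyiTrace p ρ σ := by
  set t := (1 - p) / (2 * p) with ht
  have hsand : sandwich p ρ (c • σ) = c ^ (t + t) • sandwich p ρ σ := by
    simp only [sandwich, ← ht, mpow_smul hσ hc.le, smul_mul_assoc, mul_smul_comm, smul_smul,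
      Real.rpow_add hc]
  have hexp : (t + t) * p = 1 - p := by rw [ht]; field_simp; ring
  rw [renyiTrace, hsand, mpow_smul (posSemidef_sandwich hρ hσ p) (by positivity), traceR_smul,
    ← Real.rpow_mul hc.le, hexp, renyiTrace]

lemma renyiTrace_pos (hρ : ρ.PosSemidef) (hρ0 : ρ ≠ 0) (hσ : σ.PosSemidef) (h : suppLe ρ σ)
    (hp₀ : p ≠ 0) : 0 < renyiTrace p ρ σ := by
  have hS := posSemidef_sandwich hρ hσ p
  refine traceR_pos (posSemidef_mpow hS p) fun hzero => hρ0 ?_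
  have hsand : sandwich p ρ σ = 0 :=
    mpow_injOn hp₀ hS PosSemidef.zero (hzero.trans (mpow_zero_left hp₀).symm)
  obtain ⟨C, rfl⟩ := exists_eq_conjTranspose_mul_self hρ
  have hC : C * mpow σ ((1 - p) / (2 * p)) = 0 := by
    rw [← conjTranspose_mul_self_eq_zero, conjTranspose_mul, (posSemidef_mpow hσ _).1.eq, ← hsand,
      sandwich]
    simp only [mul_assoc]
  rw [← mul_mpow_mul_mpow_neg hσ h ((1 - p) / (2 * p)), mul_assoc Cᴴ, hC, mul_zero, zero_mul]

end RenyiTrace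

section SchurComplement

variable {X A B : Mat n}

lemma suppLe_of_posSemidef_fromBlocks (hM : (fromBlocks X B Bᴴ A).PosSemidef) :
    suppLe B A := fun v hv => by
  have hw : fromBlocks X B Bᴴ A *ᵥ Sum.elim 0 v = Sum.elim (B *ᵥ v) 0 := by
    simp [fromBlocks_mulVec, hv]
  have hquad : star (Sum.elim 0 v) ⬝ᵥ fromBlocks X B Bᴴ A *ᵥ Sum.elim 0 v = 0 := by
    simp [hw, dotProduct, Fintype.sum_sum_type]
  have hzero := hw.symm.trans ((hM.dotProduct_mulVec_zero_iff _).1 hquad)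
  exact funext fun i => congrFun hzero (Sum.inl i)

lemma posSemidef_fromBlocks_zero {Z : Mat n} (hZ : Z.PosSemidef) (hA : A.PosSemidef) :
    (fromBlocks Z 0 0 A).PosSemidef := by
  obtain ⟨C, rfl⟩ := exists_eq_conjTranspose_mul_self hZ
  obtain ⟨E, rfl⟩ := exists_eq_conjTranspose_mul_self hA
  have h := posSemidef_conjTranspose_mul_self (fromBlocks C 0 0 E)
  simpa [fromBlocks_conjTranspose, fromBlocks_multiply] using h

/-- Unlike `Matrix.PosDef.fromBlocks₂₂`, this form of the Schur complement criterion allows a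
singular block `A`. -/
theorem posSemidef_fromBlocks_iff (hA : A.PosSemidef) :
    (fromBlocks X B Bᴴ A).PosSemidef ↔
      suppLe B A ∧ (X - B * mpow A (-1) * Bᴴ).PosSemidef := by
  set G := mpow A (-1)
  have hGH : Gᴴ = G := (posSemidef_mpow hA _).1
  have hBGA : suppLe B A → B * G * A = B := fun h => by
    simpa only [neg_neg, mpow_one hA.1] using mul_mpow_mul_mpow_neg hA h (-1)
  have hAGB : suppLe B A → A * (G * Bᴴ) = Bᴴ := fun h => by
    simpa [conjTranspose_mul, hGH, hA.1.eq] using congrArg conjTranspose (hBGA h)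
  constructor
  · intro hM
    have hBA := suppLe_of_posSemidef_fromBlocks hM
    have h := (hM.conjTranspose_mul_mul_same
      (fromBlocks 1 0 (-(G * Bᴴ)) 1 : Matrix (n ⊕ n) (n ⊕ n) ℂ)).submatrix Sum.inl
    refine ⟨hBA, ?_⟩
    convert h using 1
    ext i j
    simp [fromBlocks_conjTranspose, fromBlocks_multiply, hGH, hBGA hBA, hAGB hBA, ← sub_eq_add_neg]
  · rintro ⟨hBA, hZ⟩
    have h := (posSemidef_fromBlocks_zero hZ hA).conjTranspose_mul_mul_same
      (fromBlocks 1 0 (G * Bᴴ) 1 : Matrix (n ⊕ n) (n ⊕ n) ℂ)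
    convert h using 1
    simp [fromBlocks_conjTranspose, fromBlocks_multiply, hGH, hBGA hBA, hAGB hBA, mul_assoc]

end SchurComplement

/-! ### Closed sublevel sets -/

lemma suppLe_mpow_mpow_iff {ρ σ : Mat n} (hρ : ρ.PosSemidef) (hσ : σ.PosSemidef) {r s : ℝ}
    (hr : r ≠ 0) (hs : s ≠ 0) : suppLe (mpow ρ r) (mpow σ s) ↔ suppLe ρ σ :=
  ⟨fun h => suppLe_trans (suppLe_self_mpow hρ r) (suppLe_trans h (suppLe_mpow_self hσ hs)),
    fun h => suppLe_trans (suppLe_mpow_self hρ hr) (suppLe_trans h (suppLe_self_mpow hσ s))⟩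

lemma toReal_lt_one {p : ℝ≥0∞} (hp : p < 1) : p.toReal < 1 := by
  simpa using (ENNReal.toReal_lt_toReal hp.ne_top ENNReal.one_ne_top).2 hp

lemma one_lt_toReal {p : ℝ≥0∞} (hp : 1 < p) (hp_top : p ≠ ⊤) : 1 < p.toReal := by
  simpa using (ENNReal.toReal_lt_toReal ENNReal.one_ne_top hp_top).2 hp

section Sublevel

variable {ρ σ : Mat n} {p : ℝ≥0∞} {P c d : ℝ}

/-- The witness `X` dominates `ρ^{1/2} σ^{-s} ρ^{1/2}`, `s = (P-1)/P`. The point is that the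
condition on `X` is jointly convex and closed in `(σ^s, X)`. -/
theorem suppLe_and_renyiTrace_le_iff (hρ : ρ.PosSemidef) (hσ : σ.PosSemidef) (hP : 1 < P) :
    suppLe ρ σ ∧ renyiTrace P ρ σ ≤ c ↔ ∃ X : Mat n, X.PosSemidef ∧ traceR (mpow X P) ≤ c ∧
      (fromBlocks X (mpow ρ (1 / 2)) (mpow ρ (1 / 2))ᴴ (mpow σ ((P - 1) / P))).PosSemidef := by
  have hP₀ : P ≠ 0 := by positivity
  have hs : (P - 1) / P ≠ 0 := div_ne_zero (sub_ne_zero.2 hP.ne') hP₀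
  set B := mpow ρ (1 / 2)
  set A := mpow σ ((P - 1) / P) with hA
  have hA₀ : A.PosSemidef := posSemidef_mpow hσ _
  have hsupp : suppLe B A ↔ suppLe ρ σ := suppLe_mpow_mpow_iff hρ hσ (by norm_num) hs
  have hY : (B * mpow A (-1) * Bᴴ).PosSemidef :=
    (posSemidef_mpow hA₀ (-1)).mul_mul_conjTranspose_same B
  have hT : renyiTrace P ρ σ = traceR (mpow (B * mpow A (-1) * Bᴴ) P) := by
    rw [renyiTrace_eq_traceR_half_conj hρ hσ hP₀ hP.ne', hA, mpow_mpow hσ, mul_neg_one,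
      ← neg_div, neg_sub]
  simp only [posSemidef_fromBlocks_iff hA₀, hsupp, hT]
  constructor
  · rintro ⟨h, hle⟩
    exact ⟨_, hY, hle, h, by simpa using PosSemidef.zero⟩
  · rintro ⟨X, -, hle, h, hX⟩
    exact ⟨h, (traceR_mpow_mono hP.le hY hX).trans hle⟩

lemma Dp_le_iff_of_lt_one (hp : p < 1) (hρ : ρ.PosSemidef) (hσ : σ.PosSemidef) :
    Dp p ρ σ ≤ d ↔ Real.exp ((p.toReal - 1) * d) ≤ renyiTrace p.toReal ρ σ := by
  have hP : p.toReal < 1 := toReal_lt_one hp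
  rw [Dp, if_neg hp.ne_top, if_neg hp.ne, if_neg fun h => hP.not_gt h.1, ← renyiTrace]
  split_ifs with h0
  · simp [h0, Real.exp_pos]
  · have hpos : 0 < renyiTrace p.toReal ρ σ := (renyiTrace_nonneg hρ hσ).lt_of_ne' h0
    rw [EReal.coe_le_coe_iff, ← div_eq_inv_mul, div_le_iff_of_neg' (sub_neg.2 hP),
      Real.le_log_iff_exp_le hpos]

lemma Dp_le_iff_of_one_lt (hp : 1 < p) (hp_top : p ≠ ⊤) (hρ : ρ.PosSemidef) (hρ₀ : ρ ≠ 0)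
    (hσ : σ.PosSemidef) :
    Dp p ρ σ ≤ d ↔ suppLe ρ σ ∧ renyiTrace p.toReal ρ σ ≤ Real.exp ((p.toReal - 1) * d) := by
  have hP : 1 < p.toReal := one_lt_toReal hp hp_top
  rw [Dp, if_neg hp_top, if_neg hp.ne', ← renyiTrace]
  by_cases h : suppLe ρ σ
  · have hpos := renyiTrace_pos hρ hρ₀ hσ h (p := p.toReal) (by positivity)
    rw [if_neg fun h' => h'.2 h, if_neg hpos.ne', EReal.coe_le_coe_iff,
      inv_mul_le_iff₀ (sub_pos.2 hP), Real.log_le_iff_le_exp hpos, and_iff_right h]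
  · simp [h, hP]

lemma Dp_top_le_iff (hρ : ρ.PosSemidef) (hρ₀ : ρ ≠ 0) (hσ : σ.PosSemidef) :
    Dp ⊤ ρ σ ≤ d ↔ (Real.exp d • σ - ρ).PosSemidef := by
  set S : Set ℝ := {c : ℝ | 0 ≤ c ∧ (c • σ - ρ).PosSemidef}
  have hclosed : IsClosed S := isClosed_Ici.inter
    (isClosed_posSemidef.preimage (by fun_prop : Continuous fun c : ℝ => c • σ - ρ))
  have hbdd : BddBelow S := ⟨0, fun c hc => hc.1⟩
  have hInf (hne : S.Nonempty) : 0 < sInf S := by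
    refine (hclosed.csInf_mem hne hbdd).1.lt_of_ne fun h => (traceR_pos hρ hρ₀).not_ge ?_
    have hneg := (hclosed.csInf_mem hne hbdd).2
    rw [← h, zero_smul] at hneg
    linarith [traceR_nonneg hneg, traceR_sub 0 ρ, show traceR (0 : Mat n) = 0 by simp [traceR]]
  rw [Dp, if_pos rfl, Dinf]
  split_ifs with hne
  · rw [EReal.coe_le_coe_iff, Real.log_le_iff_le_exp (hInf hne)]
    refine ⟨fun h => ?_, fun h => csInf_le hbdd ⟨(Real.exp_pos d).le, h⟩⟩
    convert (posSemidef_real_smul hσ (sub_nonneg.2 h)).add (hclosed.csInf_mem hne hbdd).2 using 1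
    rw [sub_smul]
    abel
  · exact ⟨fun h => absurd h (by simp), fun h => absurd ⟨_, (Real.exp_pos d).le, h⟩ hne⟩

end Sublevel

section Closed

variable {ρ : Mat n} {p : ℝ≥0∞} {K : Set (Mat n)}

lemma continuousOn_mpow {r : ℝ} (hr : 0 ≤ r) :
    ContinuousOn (fun A : Mat n => mpow A r) {A | A.PosSemidef} :=
  (continuousOn_cfc (Real.continuous_rpow_const hr)).mono fun _ hA => hA.1

lemma continuousOn_renyiTrace {P : ℝ} (hP₀ : 0 < P) (hP₁ : P ≤ 1) (hρ : ρ.PosSemidef) :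
    ContinuousOn (renyiTrace P ρ) {σ | σ.PosSemidef} := by
  have hpow : ContinuousOn (fun σ : Mat n => mpow σ ((1 - P) / (2 * P))) {σ | σ.PosSemidef} :=
    continuousOn_mpow (div_nonneg (sub_nonneg.2 hP₁) (by positivity))
  exact continuous_traceR.comp_continuousOn <| (continuousOn_mpow hP₀.le).comp
    ((hpow.mul continuousOn_const).mul hpow) fun σ hσ => posSemidef_sandwich hρ hσ P

lemma isCompact_schur_witnesses {P : ℝ} (hP : 1 < P) (hK : IsCompact K)
    (hpos : ∀ σ ∈ K, σ.PosSemidef) (B : Mat n) (c : ℝ) :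
    IsCompact {z : Mat n × Mat n | z.1 ∈ K ∧ z.2.PosSemidef ∧ traceR (mpow z.2 P) ≤ c ∧
      (fromBlocks z.2 B Bᴴ (mpow z.1 ((P - 1) / P))).PosSemidef} := by
  have hP₀ : 0 < P := by positivity
  set L := K ×ˢ {X : Mat n | X.PosSemidef ∧ traceR X ≤ (c + (P - 1) * Fintype.card n) / P}
  have hLc : IsCompact L := hK.prod (isCompact_posSemidef_traceR_le _)
  have hcont_trace : ContinuousOn (fun z : Mat n × Mat n => traceR (mpow z.2 P)) L :=
    continuous_traceR.comp_continuousOn <| (continuousOn_mpow hP₀.le).comp continuousOn_snd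
      fun z hz => hz.2.1
  have hcont_pow : ContinuousOn (fun z : Mat n × Mat n => mpow z.1 ((P - 1) / P)) L :=
    (continuousOn_mpow (div_nonneg (sub_nonneg.2 hP.le) hP₀.le)).comp continuousOn_fst
      fun z hz => hpos _ hz.1
  have hcont_blocks : ContinuousOn (fun z : Mat n × Mat n =>
      fromBlocks z.2 B Bᴴ (mpow z.1 ((P - 1) / P))) L :=
    (by fun_prop : Continuous fun z : Mat n × Mat n => fromBlocks z.1 B Bᴴ z.2).comp_continuousOn
      (continuousOn_snd.prodMk hcont_pow)
  have hclosed := (hcont_trace.preimage_isClosed_of_isClosed hLc.isClosed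
    (isClosed_Iic (a := c))).inter
      (hcont_blocks.preimage_isClosed_of_isClosed hLc.isClosed isClosed_posSemidef)
  convert hLc.of_isClosed_subset hclosed fun z hz => hz.1.1 using 1
  ext ⟨σ, X⟩
  refine ⟨fun ⟨hσ, hX, hXc, hM⟩ => ?_, fun ⟨⟨⟨hσ, hX, _⟩, hXc⟩, _, hM⟩ => ⟨hσ, hX, hXc, hM⟩⟩
  have hXL : (σ, X) ∈ L := by
    refine ⟨hσ, hX, (le_div_iff₀' hP₀).2 ((mul_traceR_le_traceR_mpow hP.le hX).trans ?_)⟩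
    gcongr
  exact ⟨⟨hXL, hXc⟩, hXL, hM⟩

lemma isClosed_sublevel_renyiTrace {P : ℝ} (hP : 1 < P) (hρ : ρ.PosSemidef) (hK : IsCompact K)
    (hpos : ∀ σ ∈ K, σ.PosSemidef) (c : ℝ) :
    IsClosed {σ ∈ K | suppLe ρ σ ∧ renyiTrace P ρ σ ≤ c} := by
  convert ((isCompact_schur_witnesses hP hK hpos (mpow ρ (1 / 2)) c).image continuous_fst).isClosed
    using 1
  ext σ
  refine ⟨fun ⟨hσ, h⟩ => ?_, ?_⟩
  · obtain ⟨X, hX⟩ := (suppLe_and_renyiTrace_le_iff hρ (hpos σ hσ) hP).1 h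
    exact ⟨(σ, X), ⟨hσ, hX⟩, rfl⟩
  · rintro ⟨⟨σ, X⟩, ⟨hσ, hX⟩, rfl⟩
    exact ⟨hσ, (suppLe_and_renyiTrace_le_iff hρ (hpos σ hσ) hP).2 ⟨X, hX⟩⟩

theorem isClosed_sublevel_Dp (hp₀ : p ≠ 0) (hp₁ : p ≠ 1) (hρ : ρ.PosSemidef) (hρ₀ : ρ ≠ 0)
    (hK : IsCompact K) (hpos : ∀ σ ∈ K, σ.PosSemidef) (d : ℝ) :
    IsClosed {σ ∈ K | Dp p ρ σ ≤ d} := by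
  rcases eq_or_ne p ⊤ with rfl | hp_top
  · convert hK.isClosed.inter (isClosed_posSemidef.preimage
      (by fun_prop : Continuous fun σ : Mat n => Real.exp d • σ - ρ)) using 1
    ext σ
    exact and_congr_right fun hσ => Dp_top_le_iff hρ hρ₀ (hpos σ hσ)
  rcases hp₁.lt_or_gt with hp | hp
  · convert ((continuousOn_renyiTrace (ENNReal.toReal_pos hp₀ hp_top) (toReal_lt_one hp).le
      hρ).mono hpos).preimage_isClosed_of_isClosed hK.isClosed
      (isClosed_Ici (a := Real.exp ((p.toReal - 1) * d))) using 1
    ext σ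
    exact and_congr_right fun hσ => Dp_le_iff_of_lt_one hp hρ (hpos σ hσ)
  · convert isClosed_sublevel_renyiTrace (one_lt_toReal hp hp_top) hρ hK hpos
      (Real.exp ((p.toReal - 1) * d)) using 1
    ext σ
    exact and_congr_right fun hσ => Dp_le_iff_of_one_lt hp hp_top hρ hρ₀ (hpos σ hσ)

end Closed

lemma exists_isMinOn_of_isClosed_sublevel {X : Type*} [TopologicalSpace X] {K : Set X}
    {f : X → EReal} (hK : IsCompact K) (hne : K.Nonempty)
    (hf : ∀ d : ℝ, IsClosed {x ∈ K | f x ≤ d}) : ∃ x ∈ K, IsMinOn f K x := by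
  refine LowerSemicontinuousOn.exists_isMinOn hne hK fun x _ y hy => ?_
  obtain ⟨d, hyd, hdx⟩ := EReal.lt_iff_exists_real_btwn.1 hy
  filter_upwards [self_mem_nhdsWithin, mem_nhdsWithin_of_mem_nhds
    ((hf d).isOpen_compl.mem_nhds fun h => hdx.not_ge h.2)] with z hzK hz
  exact hyd.trans (not_le.1 fun h => hz ⟨hzK, h⟩)

/-! ### Power means and uniqueness away from `p = 1` -/

/-- The densities in a set `S` of matrices, over which `DpSet p ρ S` takes its infimum. -/
def densities (S : Set (Mat n)) : Set (Mat n) := {σ ∈ S | IsDensity σ}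

section Densities

variable {N : StarSubalgebra ℂ (Mat n)} {ρ σ : Mat n}

lemma isCompact_densities (N : StarSubalgebra ℂ (Mat n)) :
    IsCompact (densities (N : Set (Mat n))) := by
  have hN : IsClosed (N : Set (Mat n)) :=
    Submodule.closed_of_finiteDimensional (Subalgebra.toSubmodule N.toSubalgebra)
  have htr : IsClosed {σ : Mat n | σ.trace = 1} :=
    isClosed_singleton.preimage continuous_id.matrix_trace
  refine (isCompact_posSemidef_traceR_le 1).of_isClosed_subset
    (hN.inter (isClosed_posSemidef.inter htr)) fun σ hσ => ⟨hσ.2.1, (traceR_eq_one hσ.2).le⟩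

lemma IsDensity.ne_zero (hρ : IsDensity ρ) : ρ ≠ 0 := by
  rintro rfl
  simpa using hρ.2

lemma inv_traceR_smul_mem_densities (hσ : σ ∈ N) (hpos : σ.PosSemidef) (h₀ : σ ≠ 0) :
    (traceR σ)⁻¹ • σ ∈ densities (N : Set (Mat n)) := by
  have htr := traceR_pos hpos h₀
  refine ⟨real_smul_mem hσ _, posSemidef_real_smul hpos (inv_nonneg.2 htr.le), ?_⟩
  rw [trace_smul, trace_eq_ofReal_traceR hpos, Complex.real_smul, ← Complex.ofReal_mul,
    inv_mul_cancel₀ htr.ne', Complex.ofReal_one]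

lemma inv_traceR_smul_one_mem_densities (hρ : IsDensity ρ) :
    (traceR (1 : Mat n))⁻¹ • (1 : Mat n) ∈ densities (N : Set (Mat n)) :=
  inv_traceR_smul_mem_densities (one_mem N) PosSemidef.one fun h =>
    hρ.ne_zero (by rw [← mul_one ρ, h, mul_zero])

end Densities

/-- The power mean `((σ₁^s + σ₂^s)/2)^{1/s}` of two positive semidefinite matrices, the competitor
against which two minimizers of `D_p` are compared. -/
def powerMean (s : ℝ) (σ₁ σ₂ : Mat n) : Mat n :=
  mpow ((1 / 2 : ℝ) • mpow σ₁ s + (1 / 2 : ℝ) • mpow σ₂ s) s⁻¹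

section PowerMean

variable {σ₁ σ₂ : Mat n} {s : ℝ}

lemma posSemidef_half_add_half {A B : Mat n} (hA : A.PosSemidef) (hB : B.PosSemidef) :
    ((1 / 2 : ℝ) • A + (1 / 2 : ℝ) • B).PosSemidef :=
  convex_posSemidef hA hB (by norm_num) (by norm_num) (by norm_num)

lemma posSemidef_powerMean (h₁ : σ₁.PosSemidef) (h₂ : σ₂.PosSemidef) (s : ℝ) :
    (powerMean s σ₁ σ₂).PosSemidef :=
  posSemidef_mpow (posSemidef_half_add_half (posSemidef_mpow h₁ s) (posSemidef_mpow h₂ s)) _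

lemma powerMean_mem {N : StarSubalgebra ℂ (Mat n)} (h₁ : σ₁.PosSemidef) (h₂ : σ₂.PosSemidef)
    (hN₁ : σ₁ ∈ N) (hN₂ : σ₂ ∈ N) : powerMean s σ₁ σ₂ ∈ N :=
  cfc_mem (posSemidef_half_add_half (posSemidef_mpow h₁ s) (posSemidef_mpow h₂ s)).1
    (add_mem (real_smul_mem (cfc_mem h₁.1 hN₁ _) _) (real_smul_mem (cfc_mem h₂.1 hN₂ _) _)) _

lemma mpow_powerMean (h₁ : σ₁.PosSemidef) (h₂ : σ₂.PosSemidef) (hs : s ≠ 0) :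
    mpow (powerMean s σ₁ σ₂) s = (1 / 2 : ℝ) • mpow σ₁ s + (1 / 2 : ℝ) • mpow σ₂ s := by
  have h := posSemidef_half_add_half (posSemidef_mpow h₁ s) (posSemidef_mpow h₂ s)
  rw [powerMean, mpow_mpow h, inv_mul_cancel₀ hs, mpow_one h.1]

lemma powerMean_ne_zero (h₁ : σ₁.PosSemidef) (h₂ : σ₂.PosSemidef) (hs : s ≠ 0) (h₀ : σ₁ ≠ 0) :
    powerMean s σ₁ σ₂ ≠ 0 := by
  intro h
  have hzero := mpow_powerMean h₁ h₂ hs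
  rw [h, mpow_zero_left hs] at hzero
  have hsupp : suppLe (mpow σ₁ s) 0 := hzero ▸
    suppLe_convexCombination (posSemidef_mpow h₁ s) (posSemidef_mpow h₂ s) one_half_pos
      one_half_pos.le
  rw [← mul_one σ₁] at h₀
  exact h₀ (mul_eq_zero_of_suppLe (suppLe_trans (suppLe_self_mpow h₁ s) hsupp) (zero_mul 1))

lemma traceR_powerMean_lt (h₁ : σ₁.PosSemidef) (h₂ : σ₂.PosSemidef) (hs₀ : 0 < s) (hs₁ : s < 1)
    (hne : σ₁ ≠ σ₂) :
    traceR (powerMean s σ₁ σ₂) < 1 / 2 * traceR σ₁ + 1 / 2 * traceR σ₂ := by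
  have h := (strictConvexOn_traceR_mpow (n := n) ((one_lt_inv₀ hs₀).2 hs₁)).2
    (posSemidef_mpow h₁ s) (posSemidef_mpow h₂ s) (fun h => hne (mpow_injOn hs₀.ne' h₁ h₂ h))
    one_half_pos one_half_pos (add_halves 1)
  simpa only [powerMean, mpow_mpow h₁, mpow_mpow h₂, mul_inv_cancel₀ hs₀.ne', mpow_one h₁.1,
    mpow_one h₂.1, smul_eq_mul] using h

end PowerMean

section Uniqueness

variable {N : StarSubalgebra ℂ (Mat n)} {ρ σ σ₁ σ₂ : Mat n} {p : ℝ≥0∞} {P c d : ℝ}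

lemma le_renyiTrace_powerMean (hP₀ : 0 < P) (hP₁ : P < 1) (hρ : ρ.PosSemidef)
    (hσ₁ : σ₁.PosSemidef) (hσ₂ : σ₂.PosSemidef) (h₁ : c ≤ renyiTrace P ρ σ₁)
    (h₂ : c ≤ renyiTrace P ρ σ₂) : c ≤ renyiTrace P ρ (powerMean ((1 - P) / P) σ₁ σ₂) := by
  have hs : (1 - P) / P ≠ 0 := (div_pos (sub_pos.2 hP₁) hP₀).ne'
  have hconj {σ : Mat n} (hσ : σ.PosSemidef) :=
    (posSemidef_mpow hσ ((1 - P) / P)).mul_mul_conjTranspose_same (mpow ρ (1 / 2))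
  rw [renyiTrace_eq_traceR_half_conj hρ hσ₁ hP₀.ne' hP₁.ne] at h₁
  rw [renyiTrace_eq_traceR_half_conj hρ hσ₂ hP₀.ne' hP₁.ne] at h₂
  rw [renyiTrace_eq_traceR_half_conj hρ (posSemidef_powerMean hσ₁ hσ₂ _) hP₀.ne' hP₁.ne,
    mpow_powerMean hσ₁ hσ₂ hs]
  have hconcave := (strictConcaveOn_traceR_mpow (n := n) hP₀ hP₁).concaveOn.2 (hconj hσ₁)
    (hconj hσ₂) one_half_pos.le one_half_pos.le (add_halves 1)
  simp only [smul_eq_mul] at hconcave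
  simp only [mul_add, add_mul, mul_smul_comm, smul_mul_assoc]
  linarith

lemma renyiTrace_powerMean_le (hP : 1 < P) (hρ : ρ.PosSemidef) (hσ₁ : σ₁.PosSemidef)
    (hσ₂ : σ₂.PosSemidef) (h₁ : suppLe ρ σ₁ ∧ renyiTrace P ρ σ₁ ≤ c)
    (h₂ : suppLe ρ σ₂ ∧ renyiTrace P ρ σ₂ ≤ c) :
    suppLe ρ (powerMean ((P - 1) / P) σ₁ σ₂) ∧
      renyiTrace P ρ (powerMean ((P - 1) / P) σ₁ σ₂) ≤ c := by
  have hs : (P - 1) / P ≠ 0 := (div_pos (sub_pos.2 hP) (by positivity)).ne'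
  obtain ⟨X₁, hX₁, hc₁, hM₁⟩ := (suppLe_and_renyiTrace_le_iff hρ hσ₁ hP).1 h₁
  obtain ⟨X₂, hX₂, hc₂, hM₂⟩ := (suppLe_and_renyiTrace_le_iff hρ hσ₂ hP).1 h₂
  refine (suppLe_and_renyiTrace_le_iff hρ (posSemidef_powerMean hσ₁ hσ₂ _) hP).2
    ⟨(1 / 2 : ℝ) • X₁ + (1 / 2 : ℝ) • X₂, posSemidef_half_add_half hX₁ hX₂, ?_, ?_⟩
  · have hconvex := (strictConvexOn_traceR_mpow (n := n) hP).convexOn.2 hX₁ hX₂ one_half_pos.le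
      one_half_pos.le (add_halves 1)
    simp only [smul_eq_mul] at hconvex
    linarith
  · convert posSemidef_half_add_half hM₁ hM₂ using 1
    rw [mpow_powerMean hσ₁ hσ₂ hs, fromBlocks_smul, fromBlocks_smul, fromBlocks_add, ← add_smul,
      ← add_smul, add_halves, one_smul, one_smul]

lemma Dp_powerMean_le (hp₀ : p ≠ 0) (hp₁ : p ≠ 1) (hp_top : p ≠ ⊤) (hρ : ρ.PosSemidef)
    (hρ₀ : ρ ≠ 0) (hσ₁ : σ₁.PosSemidef) (hσ₂ : σ₂.PosSemidef) (h₁ : Dp p ρ σ₁ ≤ d)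
    (h₂ : Dp p ρ σ₂ ≤ d) :
    Dp p ρ (powerMean (|1 - p.toReal| / p.toReal) σ₁ σ₂) ≤ d := by
  have hP₀ := ENNReal.toReal_pos hp₀ hp_top
  rcases hp₁.lt_or_gt with hp | hp
  · have hP : p.toReal < 1 := toReal_lt_one hp
    rw [Dp_le_iff_of_lt_one hp hρ hσ₁] at h₁
    rw [Dp_le_iff_of_lt_one hp hρ hσ₂] at h₂
    rw [Dp_le_iff_of_lt_one hp hρ (posSemidef_powerMean hσ₁ hσ₂ _), abs_of_pos (sub_pos.2 hP)]
    exact le_renyiTrace_powerMean hP₀ hP hρ hσ₁ hσ₂ h₁ h₂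
  · have hP : 1 < p.toReal := one_lt_toReal hp hp_top
    rw [Dp_le_iff_of_one_lt hp hp_top hρ hρ₀ hσ₁] at h₁
    rw [Dp_le_iff_of_one_lt hp hp_top hρ hρ₀ hσ₂] at h₂
    rw [Dp_le_iff_of_one_lt hp hp_top hρ hρ₀ (posSemidef_powerMean hσ₁ hσ₂ _),
      abs_of_neg (sub_neg.2 hP), neg_sub]
    exact renyiTrace_powerMean_le hP hρ hσ₁ hσ₂ h₁ h₂

lemma Dp_smul_le (hp₀ : p ≠ 0) (hp₁ : p ≠ 1) (hp_top : p ≠ ⊤) (hρ : ρ.PosSemidef) (hρ₀ : ρ ≠ 0)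
    (hσ : σ.PosSemidef) (hc : 0 < c) (h : Dp p ρ σ ≤ d) :
    Dp p ρ (c • σ) ≤ (d - Real.log c : ℝ) := by
  have hP₀ := ENNReal.toReal_pos hp₀ hp_top
  have hcσ := posSemidef_real_smul hσ hc.le
  have hexp : Real.exp ((p.toReal - 1) * (d - Real.log c)) =
      c ^ (1 - p.toReal) * Real.exp ((p.toReal - 1) * d) := by
    rw [Real.rpow_def_of_pos hc, ← Real.exp_add]
    ring_nf
  rcases hp₁.lt_or_gt with hp | hp
  · rw [Dp_le_iff_of_lt_one hp hρ hσ] at h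
    rw [Dp_le_iff_of_lt_one hp hρ hcσ, hexp, renyiTrace_smul hρ hσ hP₀.ne' hc]
    gcongr
  · obtain ⟨hsupp, h⟩ := (Dp_le_iff_of_one_lt hp hp_top hρ hρ₀ hσ).1 h
    rw [Dp_le_iff_of_one_lt hp hp_top hρ hρ₀ hcσ, hexp, renyiTrace_smul hρ hσ hP₀.ne' hc]
    refine ⟨suppLe_trans hsupp (suppLe_smul_left hc.ne' fun _ hv => hv), ?_⟩
    gcongr

lemma Dp_ne_bot (p : ℝ≥0∞) (ρ σ : Mat n) : Dp p ρ σ ≠ ⊥ := by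
  unfold Dp Dinf DU
  split_ifs <;> simp [-EReal.coe_mul]

lemma Dp_ne_top_of_suppLe (hp₀ : p ≠ 0) (hp₁ : p ≠ 1) (hp_top : p ≠ ⊤) (hρ : ρ.PosSemidef)
    (hρ₀ : ρ ≠ 0) (hσ : σ.PosSemidef) (h : suppLe ρ σ) : Dp p ρ σ ≠ ⊤ := by
  have hpos := renyiTrace_pos hρ hρ₀ hσ h (ENNReal.toReal_pos hp₀ hp_top).ne'
  rw [Dp, if_neg hp_top, if_neg hp₁, if_neg fun h' => h'.2 h, ← renyiTrace, if_neg hpos.ne']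
  exact EReal.coe_ne_top _

lemma exists_real_eq_Dp_of_isMinOn (hp₀ : p ≠ 0) (hp₁ : p ≠ 1) (hp_top : p ≠ ⊤)
    (hρ : IsDensity ρ) (hmin : IsMinOn (Dp p ρ) (densities (N : Set (Mat n))) σ) :
    ∃ d : ℝ, Dp p ρ σ = d := by
  have hone := inv_traceR_smul_one_mem_densities (N := N) hρ
  have htr : traceR (1 : Mat n) ≠ 0 := fun h => by
    simpa [h] using hone.2.ne_zero
  have hsupp : suppLe ρ ((traceR (1 : Mat n))⁻¹ • (1 : Mat n)) :=
    suppLe_of_eq_mul (traceR (1 : Mat n) • ρ) (by simp [htr])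
  have htop : Dp p ρ σ ≠ ⊤ := ((hmin hone).trans_lt
    (Dp_ne_top_of_suppLe hp₀ hp₁ hp_top hρ.1 hρ.ne_zero hone.2.1 hsupp).lt_top).ne
  exact ⟨_, (EReal.coe_toReal htop (Dp_ne_bot p ρ σ)).symm⟩

theorem eq_of_isMinOn_Dp_of_ne_one (hp : 2⁻¹ < p) (hp₁ : p ≠ 1) (hp_top : p ≠ ⊤)
    (hρ : IsDensity ρ) (h₁ : σ₁ ∈ densities (N : Set (Mat n)))
    (h₂ : σ₂ ∈ densities (N : Set (Mat n)))
    (hmin₁ : IsMinOn (Dp p ρ) (densities (N : Set (Mat n))) σ₁)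
    (hmin₂ : IsMinOn (Dp p ρ) (densities (N : Set (Mat n))) σ₂) : σ₁ = σ₂ := by
  by_contra hne
  have hp₀ : p ≠ 0 := hp.ne_bot
  have hP : 2⁻¹ < p.toReal := by simpa using (ENNReal.toReal_lt_toReal (by simp) hp_top).2 hp
  have hP₁ : 1 - p.toReal ≠ 0 :=
    sub_ne_zero.2 fun h => hp₁ ((ENNReal.toReal_eq_one_iff p).1 h.symm)
  set s := |1 - p.toReal| / p.toReal
  have hs₀ : 0 < s := div_pos (abs_pos.2 hP₁) (by linarith)
  have hs₁ : s < 1 := (div_lt_one (by linarith)).2 (abs_lt.2 ⟨by linarith, by linarith⟩)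
  set τ := powerMean s σ₁ σ₂
  have hτpos : τ.PosSemidef := posSemidef_powerMean h₁.2.1 h₂.2.1 s
  have hτ₀ : τ ≠ 0 := powerMean_ne_zero h₁.2.1 h₂.2.1 hs₀.ne' h₁.2.ne_zero
  have hτN : (traceR τ)⁻¹ • τ ∈ densities (N : Set (Mat n)) :=
    inv_traceR_smul_mem_densities (powerMean_mem h₁.2.1 h₂.2.1 h₁.1 h₂.1) hτpos hτ₀
  have hτtr : traceR τ < 1 := by
    have h := traceR_powerMean_lt h₁.2.1 h₂.2.1 hs₀ hs₁ hne
    rwa [traceR_eq_one h₁.2, traceR_eq_one h₂.2, mul_one, add_halves] at h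
  obtain ⟨d, hd⟩ := exists_real_eq_Dp_of_isMinOn hp₀ hp₁ hp_top hρ hmin₁
  have hτd : Dp p ρ τ ≤ d := Dp_powerMean_le hp₀ hp₁ hp_top hρ.1 hρ.ne_zero h₁.2.1 h₂.2.1 hd.le
    ((hmin₂ h₁).trans hd.le)
  have hle := (hmin₁ hτN).trans (Dp_smul_le hp₀ hp₁ hp_top hρ.1 hρ.ne_zero hτpos
    (inv_pos.2 (traceR_pos hτpos hτ₀)) hτd)
  rw [hd, EReal.coe_le_coe_iff, Real.log_inv] at hle
  linarith [Real.log_neg (traceR_pos hτpos hτ₀) hτtr]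

end Uniqueness

/-! ### The Umegaki case and existence of minimizers -/

/-- `ω` is the element of `N` that represents the functional `y ↦ Tr (ρ y)` on `N`, i.e. the image
of `ρ` under the trace preserving conditional expectation onto `N`. -/
def IsTraceDual (N : StarSubalgebra ℂ (Mat n)) (ρ ω : Mat n) : Prop :=
  ω ∈ N ∧ ∀ y ∈ N, (ω * y).trace = (ρ * y).trace

section TraceDual

variable {N : StarSubalgebra ℂ (Mat n)} {ρ σ ω : Mat n}

lemma eq_of_forall_trace_mul_eq {a b : Mat n} (ha : a ∈ N) (hb : b ∈ N)
    (h : ∀ y ∈ N, (a * y).trace = (b * y).trace) : a = b := by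
  have hab := h (star (a - b)) (star_mem (sub_mem ha hb))
  rw [← sub_eq_zero, ← trace_sub, ← sub_mul, star_eq_conjTranspose,
    trace_mul_conjTranspose_self_eq_zero_iff] at hab
  exact sub_eq_zero.1 hab

lemma exists_isTraceDual (N : StarSubalgebra ℂ (Mat n)) (ρ : Mat n) : ∃ ω, IsTraceDual N ρ ω := by
  let V : Submodule ℂ (Mat n) := Subalgebra.toSubmodule N.toSubalgebra
  let form : Mat n →ₗ[ℂ] Mat n →ₗ[ℂ] ℂ := (LinearMap.mul ℂ (Mat n)).compr₂ (traceLinearMap n ℂ ℂ)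
  let T : V →ₗ[ℂ] Module.Dual ℂ V := form.domRestrict₁₂ V V
  have hinj : Function.Injective T := fun a b hab => Subtype.ext <|
    eq_of_forall_trace_mul_eq a.2 b.2 fun y hy => DFunLike.congr_fun hab ⟨y, hy⟩
  have hsurj := (LinearMap.injective_iff_surjective_of_finrank_eq_finrank
    Subspace.dual_finrank_eq.symm).1 hinj
  obtain ⟨ω, hω⟩ := hsurj ((form ρ).domRestrict V)
  exact ⟨ω, ω.2, fun y hy => DFunLike.congr_fun hω ⟨y, hy⟩⟩

lemma IsTraceDual.isHermitian (hρ : ρ.IsHermitian) (hω : IsTraceDual N ρ ω) : ω.IsHermitian := by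
  refine eq_of_forall_trace_mul_eq (star_mem hω.1) hω.1 fun y hy => ?_
  calc (ωᴴ * y).trace = star (ω * yᴴ).trace := by
        rw [← trace_conjTranspose, conjTranspose_mul, conjTranspose_conjTranspose, trace_mul_comm]
    _ = star (ρ * yᴴ).trace := congrArg star (hω.2 _ (star_mem hy))
    _ = (ρ * y).trace := by
        rw [← trace_conjTranspose, conjTranspose_mul, conjTranspose_conjTranspose, hρ.eq,
          trace_mul_comm]
    _ = (ω * y).trace := (hω.2 y hy).symm

lemma IsTraceDual.traceR_mul_eq (hω : IsTraceDual N ρ ω) {y : Mat n} (hy : y ∈ N) :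
    traceR (ω * y) = traceR (ρ * y) :=
  congrArg Complex.re (hω.2 y hy)

lemma IsTraceDual.posSemidef (hρ : ρ.PosSemidef) (hω : IsTraceDual N ρ ω) : ω.PosSemidef := by
  have hH := hω.isHermitian hρ.1
  set neg := cfc (fun x : ℝ => x⁻) ω with hneg
  have hneg_pos : neg.PosSemidef := posSemidef_cfc fun x _ => negPart_nonneg x
  have hmul : ω * neg = -(neg * neg) := by
    rw [hneg, mul_cfc hH, cfc_mul_cfc, ← cfc_neg]
    congr 1 with x
    rcases le_total 0 x with hx | hx
    · simp [negPart_eq_zero.2 hx]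
    · rw [negPart_eq_neg.2 hx, neg_mul_neg, mul_neg]
  have hneg_sq : traceR (neg * neg) = 0 := by
    have h₁ := traceR_mul_nonneg hρ hneg_pos
    have h₂ := traceR_mul_nonneg hneg_pos hneg_pos
    rw [← hω.traceR_mul_eq (cfc_mem hH hω.1 _), hmul, ← neg_one_smul ℝ, traceR_smul] at h₁
    linarith
  have hneg_zero : neg = 0 := by
    rw [← conjTranspose_mul_self_eq_zero, hneg_pos.1.eq]
    refine (traceR_eq_zero_iff ?_).1 hneg_sq
    simpa [hneg_pos.1.eq] using posSemidef_conjTranspose_mul_self neg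
  have hpos : ω = cfc (fun x : ℝ => x⁺) ω := by
    calc ω = cfc (fun x : ℝ => x⁺ - x⁻) ω := by simp [cfc_id' ℝ ω hH.isSelfAdjoint]
      _ = _ := by
        rw [cfc_sub _ _ ω (continuousOn_spectrum _ ω) (continuousOn_spectrum _ ω), ← hneg,
          hneg_zero, sub_zero]
  rw [hpos]
  exact posSemidef_cfc fun x _ => posPart_nonneg x

lemma IsTraceDual.suppLe_iff (hρ : ρ.PosSemidef) (hω : IsTraceDual N ρ ω) (hσN : σ ∈ N)
    (hσ : σ.IsHermitian) : suppLe ω σ ↔ suppLe ρ σ := by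
  rw [suppLe_iff_traceR_mul_kerProj (hω.posSemidef hρ) hσ, suppLe_iff_traceR_mul_kerProj hρ hσ,
    hω.traceR_mul_eq (kerProj_mem hσ hσN)]

theorem klein_inequality {A B : Mat n} (hA : A.PosSemidef) (hB : B.PosSemidef)
    (hAB : suppLe A B) (hne : A ≠ B) :
    traceR A - traceR B < traceR (A * mlog A) - traceR (A * mlog B) := by
  have hlog : cfc (fun y : ℝ => Real.log y + 1) B = mlog B + 1 := by
    rw [cfc_add_const _ _ B (continuousOn_spectrum _ B) hB.1.isSelfAdjoint, map_one, mlog]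
  have h := traceR_tangent_lt hA hB Real.strictConvexOn_mul_log
    (fun y hy => Real.hasDerivAt_mul_log hy.ne') hAB hne
  rw [hlog, ← mul_cfc hA.1, ← mul_cfc hB.1, sub_mul, mul_add, mul_add, mul_one, mul_one,
    traceR_sub, traceR_add, traceR_add] at h
  simp only [mlog] at h ⊢
  linarith

theorem IsTraceDual.DU_lt (hρ : ρ.PosSemidef) (hω : IsTraceDual N ρ ω) (hσN : σ ∈ N)
    (hσ : σ.PosSemidef) (htr : traceR σ ≤ traceR ρ) (hne : ω ≠ σ) : DU ρ ω < DU ρ σ := by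
  have hωpos := hω.posSemidef hρ
  have hρω : suppLe ρ ω := (hω.suppLe_iff hρ hω.1 hωpos.1).1 fun _ hv => hv
  rw [DU, DU, if_pos hρω]
  split_ifs with hρσ
  · have hωσ := (hω.suppLe_iff hρ hσN hσ.1).2 hρσ
    have hklein := klein_inequality hωpos hσ hωσ hne
    have htrω : traceR ω = traceR ρ := by
      simpa using hω.traceR_mul_eq (one_mem N)
    rw [EReal.coe_lt_coe_iff, traceR_sub, traceR_sub, mlog, mlog, mlog,
      ← hω.traceR_mul_eq (cfc_mem hωpos.1 hω.1 _),
      ← hω.traceR_mul_eq (cfc_mem hσ.1 hσN _)]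
    simp only [mlog] at hklein
    linarith
  · exact EReal.coe_lt_top _

theorem exists_forall_Dp_one_lt (N : StarSubalgebra ℂ (Mat n)) (hρ : IsDensity ρ) :
    ∃ ω ∈ densities (N : Set (Mat n)),
      ∀ σ ∈ densities (N : Set (Mat n)), ω ≠ σ → Dp 1 ρ ω < Dp 1 ρ σ := by
  obtain ⟨ω, hω⟩ := exists_isTraceDual N ρ
  have htr : ω.trace = 1 := by simpa [hρ.2] using hω.2 1 (one_mem N)
  refine ⟨ω, ⟨hω.1, hω.posSemidef hρ.1, htr⟩, fun σ hσ hne => ?_⟩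
  simp only [Dp, ENNReal.one_ne_top, if_true, if_false]
  exact hω.DU_lt hρ.1 hσ.1 hσ.2.1
    ((traceR_eq_one hσ.2).trans (traceR_eq_one hρ).symm).le hne

end TraceDual

section Minimizer

variable {N : StarSubalgebra ℂ (Mat n)} {p : ℝ≥0∞} {ρ σ σ₁ σ₂ : Mat n}

theorem exists_isMinOn_Dp (N : StarSubalgebra ℂ (Mat n)) (hp₀ : p ≠ 0) (hρ : IsDensity ρ) :
    ∃ σ ∈ densities (N : Set (Mat n)), IsMinOn (Dp p ρ) (densities (N : Set (Mat n))) σ := by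
  rcases eq_or_ne p 1 with rfl | hp₁
  · obtain ⟨ω, hωN, hω⟩ := exists_forall_Dp_one_lt N hρ
    refine ⟨ω, hωN, isMinOn_iff.2 fun σ hσ => ?_⟩
    rcases eq_or_ne ω σ with rfl | hne
    exacts [le_rfl, (hω σ hσ hne).le]
  · exact exists_isMinOn_of_isClosed_sublevel (isCompact_densities N)
      ⟨_, inv_traceR_smul_one_mem_densities hρ⟩
      (isClosed_sublevel_Dp hp₀ hp₁ hρ.1 hρ.ne_zero (isCompact_densities N) fun σ hσ => hσ.2.1)

theorem eq_of_isMinOn_Dp (hp : 2⁻¹ < p) (hp_top : p ≠ ⊤) (hρ : IsDensity ρ)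
    (h₁ : σ₁ ∈ densities (N : Set (Mat n))) (h₂ : σ₂ ∈ densities (N : Set (Mat n)))
    (hmin₁ : IsMinOn (Dp p ρ) (densities (N : Set (Mat n))) σ₁)
    (hmin₂ : IsMinOn (Dp p ρ) (densities (N : Set (Mat n))) σ₂) : σ₁ = σ₂ := by
  rcases eq_or_ne p 1 with rfl | hp₁
  · obtain ⟨ω, hωN, hω⟩ := exists_forall_Dp_one_lt N hρ
    have heq {σ} (hσ : σ ∈ densities (N : Set (Mat n)))
        (hmin : IsMinOn (Dp 1 ρ) (densities (N : Set (Mat n))) σ) : ω = σ := by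
      by_contra hne
      exact (hω σ hσ hne).not_ge (hmin hωN)
    rw [← heq h₁ hmin₁, ← heq h₂ hmin₂]
  · exact eq_of_isMinOn_Dp_of_ne_one hp hp₁ hp_top hρ h₁ h₂ hmin₁ hmin₂

lemma Dp_eq_DpSet_iff {S : Set (Mat n)} (hσ : σ ∈ densities S) :
    Dp p ρ σ = DpSet p ρ S ↔ IsMinOn (Dp p ρ) (densities S) σ := by
  refine ⟨fun h => isMinOn_iff.2 fun τ hτ => h.trans_le (iInf₂_le τ hτ), fun h => ?_⟩
  exact le_antisymm (le_iInf₂ fun τ hτ => h hτ) (iInf₂_le σ hσ)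

theorem statement6_general (N : StarSubalgebra ℂ (Mat n)) (hp : p ≠ 0) (hρ : IsDensity ρ) :
    (∃ σ ∈ (N : Set (Mat n)), IsDensity σ ∧ Dp p ρ σ = DpSet p ρ (N : Set (Mat n))) ∧
    (2⁻¹ < p → p ≠ ⊤ →
      ∀ σ₁ σ₂ : Mat n,
        σ₁ ∈ (N : Set (Mat n)) → IsDensity σ₁ → Dp p ρ σ₁ = DpSet p ρ (N : Set (Mat n)) →
        σ₂ ∈ (N : Set (Mat n)) → IsDensity σ₂ → Dp p ρ σ₂ = DpSet p ρ (N : Set (Mat n)) →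
          σ₁ = σ₂) := by
  refine ⟨?_, fun hp_half hp_top σ₁ σ₂ hN₁ hσ₁ h₁ hN₂ hσ₂ h₂ => ?_⟩
  · obtain ⟨σ, hσ, hmin⟩ := exists_isMinOn_Dp N hp hρ
    exact ⟨σ, hσ.1, hσ.2, (Dp_eq_DpSet_iff hσ).2 hmin⟩
  · exact eq_of_isMinOn_Dp hp_half hp_top hρ ⟨hN₁, hσ₁⟩ ⟨hN₂, hσ₂⟩
      ((Dp_eq_DpSet_iff ⟨hN₁, hσ₁⟩).1 h₁) ((Dp_eq_DpSet_iff ⟨hN₂, hσ₂⟩).1 h₂)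

end Minimizer

/-- the infimum defining `D_p(ρ‖N)` is attained by some density
`σ ∈ N`; for `1/2 < p < ∞` the minimizer is unique. -/
theorem statement6 {m : ℕ} (N : StarSubalgebra ℂ (Mat (Fin m)))
    (p : ℝ≥0∞) (hp : 2⁻¹ ≤ p) (ρ : Mat (Fin m)) (hρ : IsDensity ρ) :
    (∃ σ ∈ (N : Set (Mat (Fin m))), IsDensity σ ∧
        Dp p ρ σ = DpSet p ρ (N : Set (Mat (Fin m)))) ∧
    (2⁻¹ < p → p ≠ ⊤ →
      ∀ σ₁ σ₂ : Mat (Fin m),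
        σ₁ ∈ (N : Set (Mat (Fin m))) → IsDensity σ₁ →
          Dp p ρ σ₁ = DpSet p ρ (N : Set (Mat (Fin m))) →
        σ₂ ∈ (N : Set (Mat (Fin m))) → IsDensity σ₂ →
          Dp p ρ σ₂ = DpSet p ρ (N : Set (Mat (Fin m))) → σ₁ = σ₂) :=
  statement6_general N (ne_bot_of_le_ne_bot (by simp) hp) hρ

end GJL
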